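/- arXiv:1408.2348 — 2 statements merged into one kernel-verified Lean document; each statement's English description precedes it below -/
import Mathlib

section
/- Let X be a scheme with an action of a finite group G and x ∈ X a point whose orbit G·x is contained in a G-invariant affine open subscheme. Then the Henselization of the semilocal ring O_{X,Gx} along the ideal of G·x carries a canonical G-action, and there is a G-equivariant isomorphism Spec(O^h_{X,Gx}) ≅ G ×^{S_x} Spec(O^h_{X,x}), where S_x is the set-theoretic stabilizer of x. -/
open scoped Pointwise

universe u

/-- `B` is a henselization of `A` along the ideal `I`:  `B` is henselian along `IB`,
and `B` is universal among `A`-algebras `C` henselian along an ideal containing `IC`. -/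
def IsHenselization (A : Type u) (B : Type u) [CommRing A] [CommRing B] [Algebra A B]
    (I : Ideal A) : Prop :=
  HenselianRing B (I.map (algebraMap A B)) ∧
    ∀ (C : Type u) (_ : CommRing C) (_ : Algebra A C) (J : Ideal C),
      HenselianRing C J → I.map (algebraMap A C) ≤ J →
        ∃! φ : B →ₐ[A] C, (I.map (algebraMap A B)).map (φ : B →+* C) ≤ J

/-- The ring of functions `φ : G → C` satisfying the `H`-equivariance condition
`φ (g * h) = τ h⁻¹ (φ g)`; its spectrum is the induced scheme `G ×^H Spec C`. -/
def IndRing (G : Type*) [Group G] (H : Subgroup G) (C : Type*) [CommRing C]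
    (τ : H →* (C ≃+* C)) : Subring (G → C) where
  carrier := {φ | ∀ (h : H) (g : G), φ (g * h) = τ h⁻¹ (φ g)}
  zero_mem' := by intro h g; simp
  one_mem' := by intro h g; simp
  add_mem' := by intro φ ψ hφ hψ h g; simp [hφ h g, hψ h g]
  mul_mem' := by intro φ ψ hφ hψ h g; simp [hφ h g, hψ h g]
  neg_mem' := by intro φ hφ h g; simp [hφ h g]

section Helpers

open Polynomial

theorem isUnit_mk_iff_aux {R : Type*} [CommRing R] (I : Ideal R) (x : R) :
    IsUnit (Ideal.Quotient.mk I x) ↔ ∃ u, x * u - 1 ∈ I := by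
  rw [isUnit_iff_exists_inv]
  constructor
  · rintro ⟨b, hb⟩
    obtain ⟨b, rfl⟩ := Ideal.Quotient.mk_surjective b
    refine ⟨b, ?_⟩
    rw [← Ideal.Quotient.eq_zero_iff_mem]
    simp [hb]
  · rintro ⟨u, hu⟩
    refine ⟨Ideal.Quotient.mk I u, ?_⟩
    rw [← Ideal.Quotient.eq_zero_iff_mem] at hu
    rw [map_sub, map_mul, map_one, sub_eq_zero] at hu
    exact hu

theorem isUnit_of_mem_aux {R : Type*} [CommRing R] {I : Ideal R} (h : I ≤ Ideal.jacobson ⊥)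
    {x : R} (hx : x - 1 ∈ I) : IsUnit x :=
  Ideal.isUnit_of_sub_one_mem_jacobson_bot _ (h hx)

theorem idem_eq_zero_aux {R : Type*} [CommRing R] {I : Ideal R} (h : I ≤ Ideal.jacobson ⊥)
    {e : R} (he : e * e = e) (hx : e ∈ I) : e = 0 := by
  have hu : IsUnit (1 - e) := isUnit_of_mem_aux h (by simpa using hx)
  have h0 : (1 - e) * e = 0 := by linear_combination -he
  exact (hu.mul_right_eq_zero).1 h0

theorem idem_eq_aux {R : Type*} [CommRing R] {I : Ideal R} (h : I ≤ Ideal.jacobson ⊥)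
    {e f : R} (he : e * e = e) (hf : f * f = f) (hx : e - f ∈ I) : e = f := by
  have h1 : e * (1 - f) = 0 := by
    refine idem_eq_zero_aux h (by linear_combination (1 - f) ^ 2 * he + e * hf) ?_
    have : e * (1 - f) = e * (e - f) := by linear_combination -he
    rw [this]; exact I.mul_mem_left _ hx
  have h2 : f * (1 - e) = 0 := by
    refine idem_eq_zero_aux h (by linear_combination (1 - e) ^ 2 * hf + f * he) ?_
    have : f * (1 - e) = -f * (e - f) := by linear_combination -hf
    rw [this]; exact I.mul_mem_left _ hx
  linear_combination h1 - h2

/-- Lifting idempotents in a henselian pair. -/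
theorem lift_idem_aux {R : Type*} [CommRing R] {I : Ideal R} (h : HenselianRing R I)
    {a : R} (ha : a * a - a ∈ I) : ∃ e, e * e = e ∧ e - a ∈ I := by
  nontriviality R
  obtain ⟨e, he, hea⟩ := h.is_henselian (X ^ 2 - X)
    (monic_X_pow_sub (by rw [degree_X]; norm_num)) a (by simpa [pow_two] using ha)
    (by
      rw [isUnit_mk_iff_aux]
      refine ⟨2 * a - 1, ?_⟩
      have : (derivative (X ^ 2 - X : R[X])).eval a * (2 * a - 1) - 1 = 4 * (a * a - a) := by
        simp; ring
      rw [this]; exact I.mul_mem_left _ ha)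
  refine ⟨e, ?_, hea⟩
  simp [IsRoot, sub_eq_zero, pow_two] at he
  exact he

/-- A direct factor of a henselian pair is henselian. -/
theorem henselian_quot_aux {R : Type*} [CommRing R] {I : Ideal R} (h : HenselianRing R I)
    {e : R} (he : e * e = e) :
    HenselianRing (R ⧸ Ideal.span {1 - e}) (I.map (Ideal.Quotient.mk (Ideal.span {1 - e}))) := by
  set K := Ideal.span {1 - e} with hK
  have hmem : ∀ x : R, x ∈ K ↔ e * x = 0 := by
    intro x
    rw [hK, Ideal.mem_span_singleton']
    constructor
    · rintro ⟨y, rfl⟩; linear_combination -y * he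
    · intro hx; exact ⟨x, by linear_combination -hx⟩
  have hmap : ∀ x : R, Ideal.Quotient.mk K x ∈ I.map (Ideal.Quotient.mk K) ↔ e * x ∈ I := by
    intro x
    rw [Ideal.mem_map_iff_of_surjective _ Ideal.Quotient.mk_surjective]
    constructor
    · rintro ⟨y, hy, hyx⟩
      rw [Ideal.Quotient.eq, hmem] at hyx
      have : e * x = e * y := by linear_combination -hyx
      rw [this]; exact I.mul_mem_left _ hy
    · intro hx
      refine ⟨e * x, hx, ?_⟩
      rw [Ideal.Quotient.eq, hmem]
      linear_combination x * he
  have hjac : I.map (Ideal.Quotient.mk K) ≤ Ideal.jacobson ⊥ := by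
    intro x hx
    rw [Ideal.mem_jacobson_bot]
    intro y
    obtain ⟨x, rfl⟩ := Ideal.Quotient.mk_surjective x
    obtain ⟨y, rfl⟩ := Ideal.Quotient.mk_surjective y
    rw [hmap] at hx
    have hu := (Ideal.mem_jacobson_bot.1 (h.jac hx) y).map (Ideal.Quotient.mk K)
    have he1 : Ideal.Quotient.mk K e = 1 := by
      rw [← map_one (Ideal.Quotient.mk K), Ideal.Quotient.eq, hmem]; linear_combination he
    simpa [he1] using hu
  refine ⟨hjac, ?_⟩
  intro f hf a₀ hfa hf'
  obtain ⟨a₀, rfl⟩ := Ideal.Quotient.mk_surjective a₀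
  obtain ⟨q, rfl, hdeg, hq⟩ := lifts_and_natDegree_eq_and_monic (f := Ideal.Quotient.mk K)
    ((mem_lifts _).2 (map_surjective _ Ideal.Quotient.mk_surjective f)) hf
  rw [derivative_map] at hf'
  rw [eval_map_apply] at hfa hf'
  rw [hmap] at hfa
  rw [isUnit_mk_iff_aux] at hf'
  obtain ⟨u, hu⟩ := hf'
  obtain ⟨u, rfl⟩ := Ideal.Quotient.mk_surjective u
  rw [← map_mul, ← map_one (Ideal.Quotient.mk K), ← map_sub, hmap] at hu
  rcases Nat.eq_zero_or_pos q.natDegree with h0 | hpos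
  · have hq1 : q = 1 := (Polynomial.Monic.natDegree_eq_zero hq).1 h0
    subst hq1
    simp only [eval_one, mul_one] at hfa
    have he0 := idem_eq_zero_aux h.jac he hfa
    refine ⟨Ideal.Quotient.mk K a₀, ?_, by simp⟩
    rw [IsRoot, eval_map_apply, Ideal.Quotient.eq_zero_iff_mem, hmem, he0, zero_mul]
  obtain ⟨n, hn⟩ := Nat.exists_eq_add_of_lt hpos
  rw [zero_add] at hn
  set a := e * a₀ + (1 - e) with ha
  set P : R[X] := X ^ n * (X - C 1) with hP
  have key : ∀ p : R[X], e * p.eval a = e * p.eval a₀ := by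
    intro p
    obtain ⟨c, hc⟩ := sub_dvd_eval_sub a a₀ p
    have : e * (a - a₀) = 0 := by rw [ha]; linear_combination (a₀ - 1) * he
    linear_combination e * hc + c * this
  have key1 : ∀ p : R[X], (1 - e) * p.eval a = (1 - e) * p.eval 1 := by
    intro p
    obtain ⟨c, hc⟩ := sub_dvd_eval_sub a 1 p
    have : (1 - e) * (a - 1) = 0 := by rw [ha]; linear_combination (1 - a₀) * he
    linear_combination (1 - e) * hc + c * this
  set F : R[X] := C e * q + C (1 - e) * P with hF
  have hPm : P.Monic := (monic_X_pow n).mul (monic_X_sub_C 1)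
  have hFm : F.Monic := by
    nontriviality R
    have hPn : P.natDegree = n + 1 := by
      rw [hP, (monic_X_pow n).natDegree_mul (monic_X_sub_C 1), natDegree_X_sub_C,
        natDegree_X_pow]
    refine monic_of_natDegree_le_of_coeff_eq_one (n + 1) ?_ ?_
    · rw [hF]
      refine (natDegree_add_le _ _).trans (max_le ?_ ?_)
      · exact (natDegree_C_mul_le _ _).trans hn.le
      · exact (natDegree_C_mul_le _ _).trans hPn.le
    · have h1 : q.coeff (n + 1) = 1 := by rw [← hn]; exact hq
      have h2 : P.coeff (n + 1) = 1 := by rw [← hPn]; exact hPm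
      rw [hF, coeff_add, coeff_C_mul, coeff_C_mul, h1, h2]; ring
  have hFa : F.eval a = e * q.eval a₀ := by
    rw [hF, eval_add, eval_mul, eval_mul, eval_C, eval_C, key, key1]
    simp [hP]
  have hF'a : F.derivative.eval a = e * q.derivative.eval a₀ + (1 - e) := by
    rw [hF, derivative_add, derivative_C_mul, derivative_C_mul, eval_add, eval_mul, eval_mul,
      eval_C, eval_C, key, key1]
    simp [hP]
  obtain ⟨b, hb, hba⟩ := h.is_henselian F hFm a (by rw [hFa]; exact hfa) (by
    rw [isUnit_mk_iff_aux, hF'a]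
    refine ⟨e * u + (1 - e), ?_⟩
    convert hu using 1
    linear_combination (q.derivative.eval a₀ * u - q.derivative.eval a₀ - u + 1) * he)
  refine ⟨Ideal.Quotient.mk K b, ?_, ?_⟩
  · rw [IsRoot, eval_map_apply, Ideal.Quotient.eq_zero_iff_mem, hmem]
    have hb' : e * F.eval b = 0 := by rw [hb.eq_zero, mul_zero]
    rw [hF, eval_add, eval_mul, eval_mul, eval_C, eval_C] at hb'
    linear_combination hb' + (P.eval b - q.eval b) * he
  · rw [← map_sub, hmap]
    have : e * (b - a₀) = e * (b - a) := by rw [ha]; linear_combination (a₀ - 1) * he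
    rw [this]; exact I.mul_mem_left _ hba

/-- Henselization in terms of ring homomorphisms. -/
def IsHensHom {A B : Type u} [CommRing A] [CommRing B] (f : A →+* B) (I : Ideal A) : Prop :=
  HenselianRing B (I.map f) ∧
    ∀ (D : Type u) [CommRing D] (g : A →+* D) (J : Ideal D),
      HenselianRing D J → I.map g ≤ J → ∃! φ : B →+* D, φ.comp f = g

theorem IsHenselization.isHensHom {A B : Type u} [CommRing A] [CommRing B] [Algebra A B]
    {I : Ideal A} (h : IsHenselization A B I) : IsHensHom (algebraMap A B) I := by
  refine ⟨h.1, ?_⟩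
  intro D _ g J hJ hIJ
  let _ := g.toAlgebra
  obtain ⟨φ, -, hφ⟩ := h.2 D _ g.toAlgebra J hJ hIJ
  refine ⟨φ, φ.comp_algebraMap, ?_⟩
  intro ψ hψ
  let ψ' : B →ₐ[A] D := { ψ with commutes' := fun a => congrArg (fun k => k a) hψ }
  have : ψ' = φ := hφ ψ' (by
    refine le_trans (le_of_eq ?_) hIJ
    rw [Ideal.map_map]
    congr 1)
  rw [← this]
  rfl

theorem henselian_equiv_aux {R S : Type*} [CommRing R] [CommRing S] (e : R ≃+* S) {I : Ideal R}
    (h : HenselianRing R I) : HenselianRing S (I.map (e : R →+* S)) := by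
  have hmap : ∀ x : S, x ∈ I.map (e : R →+* S) ↔ e.symm x ∈ I := by
    intro x
    rw [Ideal.mem_map_iff_of_surjective (e : R →+* S) e.surjective]
    constructor
    · rintro ⟨y, hy, rfl⟩; simpa using hy
    · intro hx; exact ⟨_, hx, by simp⟩
  refine ⟨?_, ?_⟩
  · intro x hx
    rw [hmap] at hx
    rw [Ideal.mem_jacobson_bot]
    intro y
    have := (Ideal.mem_jacobson_bot.1 (h.jac hx) (e.symm y)).map (e : R →+* S)
    simpa using this
  · intro f hf a ha hu
    rw [isUnit_mk_iff_aux] at hu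
    obtain ⟨u, hu⟩ := hu
    rw [hmap] at hu ha
    have hev : ∀ (p : S[X]) (x : S),
        (p.map (e.symm : S →+* R)).eval (e.symm x) = e.symm (p.eval x) := by
      intro p x
      exact eval_map_apply (e.symm : S →+* R) x
    obtain ⟨b, hb, hba⟩ := h.is_henselian (f.map (e.symm : S →+* R)) (hf.map _) (e.symm a)
      (by rw [hev]; exact ha) (by
        rw [isUnit_mk_iff_aux, derivative_map, hev]
        exact ⟨e.symm u, by simpa using hu⟩)
    refine ⟨e b, ?_, ?_⟩
    · have := hev f (e b)
      rw [e.symm_apply_apply, hb.eq_zero] at this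
      exact (map_eq_zero_iff _ e.symm.injective).1 this.symm
    · rw [hmap]; simpa using hba

theorem IsHensHom.trans_equiv {A B B' : Type u} [CommRing A] [CommRing B] [CommRing B']
    {f : A →+* B} {I : Ideal A} (h : IsHensHom f I) (e : B ≃+* B') (f' : A →+* B')
    (hf : ∀ a, f' a = e (f a)) : IsHensHom f' I := by
  obtain rfl : f' = (e : B →+* B').comp f := RingHom.ext hf
  refine ⟨?_, ?_⟩
  · rw [← Ideal.map_map]; exact henselian_equiv_aux e h.1
  · intro D _ g J hJ hIJ
    obtain ⟨φ, hφ, huniq⟩ := h.2 D g J hJ hIJ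
    refine ⟨φ.comp (e.symm : B' →+* B), ?_, ?_⟩
    · ext a
      simpa using congrArg (fun k => k a) hφ
    · intro ψ hψ
      have := huniq (ψ.comp (e : B →+* B')) (by rw [← hψ]; rfl)
      rw [← this]
      ext b
      simp

theorem IsHensHom.twist {A B : Type u} [CommRing A] [CommRing B]
    {f : A →+* B} {I : Ideal A} (h : IsHensHom f I) (s : A ≃+* A) :
    IsHensHom (f.comp (s : A →+* A)) (I.comap (s : A →+* A)) := by
  have hI : (I.comap (s : A →+* A)).map (s : A →+* A) = I :=
    Ideal.map_comap_of_surjective _ s.surjective I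
  refine ⟨?_, ?_⟩
  · rw [← Ideal.map_map, hI]; exact h.1
  · intro D _ g J hJ hIJ
    obtain ⟨φ, hφ, huniq⟩ := h.2 D (g.comp (s.symm : A →+* A)) J hJ (by
      refine le_trans ?_ hIJ
      rw [Ideal.map_le_iff_le_comap]
      intro x hx
      refine Ideal.mem_map_of_mem g (x := s.symm x) ?_
      rw [Ideal.mem_comap]
      have hsx : (s : A →+* A) (s.symm x) = x := s.apply_symm_apply x
      rw [hsx]; exact hx)
    refine ⟨φ, ?_, ?_⟩
    · ext a
      simpa using congrArg (fun k => k (s a)) hφ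
    · intro ψ hψ
      refine huniq ψ ?_
      ext a
      simpa using congrArg (fun k => k (s.symm a)) hψ

theorem IsHensHom.hom_ext {A B B' : Type u} [CommRing A] [CommRing B] [CommRing B']
    {f : A →+* B} {f' : A →+* B'} {I : Ideal A} (h : IsHensHom f I) (h' : IsHensHom f' I)
    (φ ψ : B →+* B') (hφ : φ.comp f = f') (hψ : ψ.comp f = f') : φ = ψ :=
  (h.2 B' f' _ h'.1 le_rfl).unique hφ hψ

theorem IsHensHom.exists_equiv {A B B' : Type u} [CommRing A] [CommRing B] [CommRing B']
    {f : A →+* B} {f' : A →+* B'} {I : Ideal A} (h : IsHensHom f I) (h' : IsHensHom f' I) :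
    ∃ e : B ≃+* B', ∀ a, e (f a) = f' a := by
  obtain ⟨φ, hφ, -⟩ := h.2 B' f' _ h'.1 le_rfl
  obtain ⟨ψ, hψ, -⟩ := h'.2 B f _ h.1 le_rfl
  refine ⟨RingEquiv.ofRingHom φ ψ ?_ ?_, fun a => congrArg (fun k => k a) hφ⟩
  · exact h'.hom_ext h' _ _ (by rw [RingHom.comp_assoc, hψ, hφ]) rfl
  · exact h.hom_ext h _ _ (by rw [RingHom.comp_assoc, hφ, hψ]) rfl

theorem IsHensHom.of_localization {A C : Type u} [CommRing A] (m : Ideal A) [hm : m.IsMaximal]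
    [CommRing C] (f : Localization.AtPrime m →+* C)
    (h : IsHensHom f (IsLocalRing.maximalIdeal (Localization.AtPrime m))) :
    IsHensHom (f.comp (algebraMap A (Localization.AtPrime m))) m := by
  have hmm : m.map (algebraMap A (Localization.AtPrime m))
      = IsLocalRing.maximalIdeal (Localization.AtPrime m) :=
    Localization.AtPrime.map_eq_maximalIdeal
  refine ⟨?_, ?_⟩
  · rw [← Ideal.map_map, hmm]; exact h.1
  · intro D _ g J hJ hIJ
    have hu : ∀ y : m.primeCompl, IsUnit (g y) := by
      rintro ⟨y, hy⟩
      obtain ⟨z, hz⟩ := Ideal.IsMaximal.exists_inv hm hy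
      obtain ⟨i, hi, hzi⟩ := hz
      have : IsUnit (g (z * y)) := by
        refine isUnit_of_mem_aux hJ.jac ?_
        have : g (z * y) - 1 = g (-i) := by
          rw [← map_one g, ← map_sub]; congr 1; linear_combination hzi
        rw [this]
        exact hIJ (Ideal.mem_map_of_mem _ (m.neg_mem hi))
      rw [map_mul] at this
      exact isUnit_of_mul_isUnit_right this
    obtain ⟨φ, hφ, huniq⟩ := h.2 D (IsLocalization.lift hu) J hJ (by
      rw [← hmm, Ideal.map_map, IsLocalization.lift_comp]; exact hIJ)
    refine ⟨φ, ?_, ?_⟩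
    · show φ.comp (f.comp _) = g
      rw [← RingHom.comp_assoc, hφ, IsLocalization.lift_comp]
    · intro ψ hψ
      refine huniq ψ ?_
      refine IsLocalization.ringHom_ext m.primeCompl ?_
      rw [IsLocalization.lift_comp, ← hψ]; rfl

theorem IsHensHom.pi {A : Type u} [CommRing A] {k : Type u} [Finite k] (I : k → Ideal A)
    (hI : Pairwise fun i j => IsCoprime (I i) (I j)) {C : k → Type u} [∀ i, CommRing (C i)]
    (f : ∀ i, A →+* C i) (h : ∀ i, IsHensHom (f i) (I i)) :
    IsHensHom (RingHom.pi f) (⨅ i, I i) := by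
  classical
  have : Fintype k := Fintype.ofFinite k
  have hex : ∀ i, ∃ a : A, a - 1 ∈ I i ∧ ∀ j, j ≠ i → a ∈ I j := by
    intro i
    obtain ⟨r, hr⟩ := Ideal.exists_forall_sub_mem_ideal hI (fun j => if j = i then 1 else 0)
    refine ⟨r, by simpa using hr i, fun j hj => by simpa [hj] using hr j⟩
  choose a ha1 ha0 using hex
  -- the extended ideal is the product of the extended ideals
  have hideal : ∀ x : (∀ i, C i), x ∈ (⨅ i, I i).map (RingHom.pi f) ↔
      ∀ i, x i ∈ (I i).map (f i) := by
    intro x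
    constructor
    · intro hx i
      have hle : (⨅ i, I i).map (RingHom.pi f) ≤
          ((I i).map (f i)).comap (Pi.evalRingHom C i) := by
        rw [Ideal.map_le_iff_le_comap]
        intro b hb
        have : b ∈ I i := (Ideal.mem_iInf.1 hb) i
        simpa using Ideal.mem_map_of_mem (f i) this
      exact hle hx
    · intro hx
      have hs : ∀ i, ∀ y ∈ (I i).map (f i),
          (Pi.single i y : ∀ i, C i) ∈ (⨅ i, I i).map (RingHom.pi f) := by
        intro i y hy
        have hle : (I i).map (f i) ≤
            ((⨅ i, I i).map (RingHom.pi f)).map (Pi.evalRingHom C i) := by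
          rw [Ideal.map_map, Ideal.map_le_iff_le_comap]
          intro b hb
          rw [Ideal.mem_comap]
          have hu : IsUnit (f i (a i)) := isUnit_of_mem_aux (h i).1.jac (by
            rw [← map_one (f i), ← map_sub]; exact Ideal.mem_map_of_mem _ (ha1 i))
          have hba : b * a i ∈ ⨅ i, I i := by
            rw [Ideal.mem_iInf]
            intro j
            by_cases hj : j = i
            · subst hj; exact (I j).mul_mem_right _ hb
            · exact (I j).mul_mem_left _ (ha0 i j hj)
          have h2 := Ideal.mem_map_of_mem ((Pi.evalRingHom C i).comp (RingHom.pi f)) hba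
          have h3 : ((Pi.evalRingHom C i).comp (RingHom.pi f)) (b * a i)
              = f i b * f i (a i) := by simp
          rw [h3] at h2
          exact (Ideal.mul_unit_mem_iff_mem _ hu).1 h2
        obtain ⟨z, hz, rfl⟩ := (Ideal.mem_map_iff_of_surjective (Pi.evalRingHom C i)
          (Function.surjective_eval i)).1 (hle hy)
        have : (Pi.single i (Pi.evalRingHom C i z) : ∀ i, C i) = Pi.single i 1 * z := by
          ext j
          by_cases hj : j = i
          · subst hj; simp
          · simp [hj]
        rw [this]
        exact Ideal.mul_mem_left _ _ hz
      rw [← Finset.univ_sum_single x]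
      exact Ideal.sum_mem _ fun i _ => hs i _ (hx i)
  refine ⟨⟨?_, ?_⟩, ?_⟩
  · intro x hx
    rw [hideal] at hx
    rw [Ideal.mem_jacobson_bot]
    intro y
    rw [Pi.isUnit_iff]
    intro i
    exact Ideal.mem_jacobson_bot.1 ((h i).1.jac (hx i)) (y i)
  · intro p hp x hx hu
    rw [hideal] at hx
    rw [isUnit_mk_iff_aux] at hu
    obtain ⟨u, hu⟩ := hu
    rw [hideal] at hu
    have hev : ∀ (i : k) (q : (∀ i, C i)[X]) (z : ∀ i, C i),
        (q.map (Pi.evalRingHom C i)).eval (z i) = (q.eval z) i := by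
      intro i q z
      exact eval_map_apply (Pi.evalRingHom C i) z
    have hroot : ∀ i, ∃ b : C i, (p.map (Pi.evalRingHom C i)).IsRoot b ∧
        b - x i ∈ (I i).map (f i) := by
      intro i
      refine (h i).1.is_henselian _ (hp.map _) (x i) ?_ ?_
      · rw [hev]; exact hx i
      · rw [isUnit_mk_iff_aux, derivative_map, hev]
        exact ⟨u i, hu i⟩
    choose b hb hbx using hroot
    refine ⟨b, ?_, ?_⟩
    · funext i
      rw [← hev]
      exact hb i
    · rw [hideal]; exact hbx
  · intro D _ g J hJ hIJ
    have hgJ : ∀ x ∈ ⨅ i, I i, g x ∈ J := fun x hx => hIJ (Ideal.mem_map_of_mem _ hx)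
    have hlift : ∀ i, ∃ e : D, e * e = e ∧ e - g (a i) ∈ J := by
      intro i
      refine lift_idem_aux hJ ?_
      rw [← map_mul, ← map_sub]
      refine hgJ _ ?_
      rw [Ideal.mem_iInf]
      intro j
      have : a i * a i - a i = a i * (a i - 1) := by ring
      rw [this]
      by_cases hj : j = i
      · subst hj; exact (I j).mul_mem_left _ (ha1 j)
      · exact (I j).mul_mem_right _ (ha0 i j hj)
    choose e hee hea using hlift
    have hortho : ∀ i j, i ≠ j → e i * e j = 0 := by
      intro i j hij
      refine idem_eq_zero_aux hJ.jac ?_ ?_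
      · linear_combination (e j * e j) * hee i + e i * hee j
      · have haa : g (a i * a j) ∈ J := by
          refine hgJ _ ?_
          rw [Ideal.mem_iInf]
          intro l
          by_cases hl : l = i
          · exact (I l).mul_mem_left _ (ha0 j l (hl ▸ hij))
          · exact (I l).mul_mem_right _ (ha0 i l hl)
        have : e i * e j = (e i - g (a i)) * e j + g (a i) * (e j - g (a j)) + g (a i * a j) := by
          rw [map_mul]; ring
        rw [this]
        exact J.add_mem (J.add_mem (J.mul_mem_right _ (hea i)) (J.mul_mem_left _ (hea j))) haa
    have hoi : OrthogonalIdempotents e := ⟨fun i => hee i, fun i j hij => hortho i j hij⟩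
    have hsum : ∑ i, e i = 1 := by
      refine idem_eq_aux hJ.jac hoi.isIdempotentElem_sum (mul_one 1) ?_
      have h1 : g (∑ i, a i - 1) ∈ J := by
        refine hgJ _ ?_
        rw [Ideal.mem_iInf]
        intro l
        rw [← Finset.add_sum_erase _ _ (Finset.mem_univ l)]
        have : a l + ∑ i ∈ Finset.univ.erase l, a i - 1
            = (a l - 1) + ∑ i ∈ Finset.univ.erase l, a i := by ring
        rw [this]
        refine (I l).add_mem (ha1 l) (Ideal.sum_mem _ fun i hi => ?_)
        exact ha0 i l (Finset.ne_of_mem_erase hi).symm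
      have : ∑ i, e i - 1 = ∑ i, (e i - g (a i)) + g (∑ i, a i - 1) := by
        rw [map_sub, map_sum, Finset.sum_sub_distrib, map_one]; ring
      rw [this]
      exact J.add_mem (Ideal.sum_mem _ fun i _ => hea i) h1
    have hcoi : CompleteOrthogonalIdempotents e := ⟨hoi, hsum⟩
    have hbij := hcoi.bijective_pi
    set π : ∀ i, D →+* D ⧸ Ideal.span {1 - e i} := fun i => Ideal.Quotient.mk _ with hπ
    have hπe : ∀ i, π i (e i) = 1 := by
      intro i
      rw [← map_one (π i), eq_comm, hπ]
      exact Ideal.Quotient.eq.2 (Ideal.mem_span_singleton_self _)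
    have huniv : ∀ i, ∃! φ : C i →+* D ⧸ Ideal.span {1 - e i},
        φ.comp (f i) = (π i).comp g := by
      intro i
      refine (h i).2 _ _ (J.map (π i)) (henselian_quot_aux hJ (hee i)) ?_
      rw [Ideal.map_le_iff_le_comap]
      intro x hx
      rw [Ideal.mem_comap]
      have h1 : g (x * a i) ∈ J := by
        refine hgJ _ ?_
        rw [Ideal.mem_iInf]
        intro l
        by_cases hl : l = i
        · subst hl; exact (I l).mul_mem_right _ hx
        · exact (I l).mul_mem_left _ (ha0 i l hl)
      have h2 : g x * e i ∈ J := by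
        have : g x * e i = g x * (e i - g (a i)) + g (x * a i) := by rw [map_mul]; ring
        rw [this]
        exact J.add_mem (J.mul_mem_left _ (hea i)) h1
      have h3 : ((π i).comp g) x = π i (g x * e i) := by
        rw [map_mul, hπe, mul_one]; rfl
      rw [h3]
      exact Ideal.mem_map_of_mem _ h2
    let E : D ≃+* (∀ i, D ⧸ Ideal.span {1 - e i}) := RingEquiv.ofBijective _ hbij
    have hE : ∀ d i, E d i = π i d := fun d i => rfl
    -- any solution sends the standard idempotents to the `e i`
    have hsingle : ∀ φ : (∀ i, C i) →+* D, φ.comp (RingHom.pi f) = g →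
        ∀ i, φ (Pi.single i 1) = e i := by
      intro φ hφ i
      refine idem_eq_aux hJ.jac ?_ (hee i) ?_
      · rw [← map_mul, ← Pi.single_mul, mul_one]
      · have h1 : (Pi.single i 1 : ∀ i, C i) - RingHom.pi f (a i)
            ∈ (⨅ i, I i).map (RingHom.pi f) := by
          rw [hideal]
          intro j
          by_cases hj : j = i
          · subst hj
            have := Ideal.mem_map_of_mem (f j) ((I j).neg_mem (ha1 j))
            simpa using this
          · have := Ideal.mem_map_of_mem (f j) ((I j).neg_mem (ha0 i j hj))
            simpa [hj] using this
        have h2 := Ideal.mem_map_of_mem φ h1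
        rw [Ideal.map_map, hφ, map_sub] at h2
        have h3 : φ (RingHom.pi f (a i)) = g (a i) := congrArg (fun k => k (a i)) hφ
        rw [h3] at h2
        have : φ (Pi.single i 1) - e i = (φ (Pi.single i 1) - g (a i)) - (e i - g (a i)) := by
          ring
        rw [this]
        exact J.sub_mem (hIJ h2) (hea i)
    choose Φ hΦ hΦu using fun i => (huniv i)
    have hΦ' : ∀ i x, Φ i (f i x) = π i (g x) := fun i x => congrArg (fun k => k x) (hΦ i)
    -- any solution is determined
    have hdet : ∀ φ : (∀ i, C i) →+* D, φ.comp (RingHom.pi f) = g →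
        ∀ x i, π i (φ x) = Φ i (x i) := by
      intro φ hφ x i
      let ψ : C i →+* D ⧸ Ideal.span {1 - e i} :=
        { toFun := fun c => π i (φ (Pi.single i c))
          map_one' := by rw [hsingle φ hφ, hπe]
          map_zero' := by simp
          map_add' := fun c d => by rw [Pi.single_add, map_add, map_add]
          map_mul' := fun c d => by rw [Pi.single_mul, map_mul, map_mul] }
      have hmul : ∀ y : (∀ i, C i), π i (φ y) = ψ (y i) := by
        intro y
        have h1 : (Pi.single i (y i) : ∀ i, C i) = Pi.single i 1 * y := by
          ext j
          by_cases hj : j = i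
          · subst hj; simp
          · simp [hj]
        show π i (φ y) = π i (φ (Pi.single i (y i)))
        rw [h1, map_mul, map_mul, hsingle φ hφ, hπe, one_mul]
      have hψ : ψ = Φ i := by
        refine hΦu i ψ ?_
        ext b
        have h1 := hmul (RingHom.pi f b)
        have h2 : φ (RingHom.pi f b) = g b := congrArg (fun k => k b) hφ
        rw [h2] at h1
        exact h1.symm
      rw [hmul, hψ]
    refine ⟨(E.symm : _ →+* D).comp (RingHom.pi fun i => (Φ i).comp (Pi.evalRingHom C i)), ?_, ?_⟩
    · ext b
      show E.symm _ = g b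
      rw [RingEquiv.symm_apply_eq]
      funext i
      rw [hE]
      exact hΦ' i b
    · intro φ hφ
      refine RingHom.ext fun x => ?_
      show φ x = E.symm _
      rw [RingEquiv.eq_symm_apply]
      funext i
      rw [hE]
      exact hdet φ hφ x i

end Helpers

/-- Let `G` be a finite group acting on a scheme `X` and let `x` be a point
whose orbit is contained in an invariant affine open `Spec A`; algebraically, `A` is the
semilocal ring `O_{X,Gx}`, i.e. the maximal ideals of `A` form a single `G`-orbit `G·m`,
and `S_x = H` is the stabilizer of `m`.  Then the henselization `B` of `A` along the ideal
`⨅_{g} g·m` of the orbit carries a canonical `G`-action compatible with the action on `A`,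
and there is a `G`-equivariant isomorphism
`Spec B ≅ G ×^H Spec C`, i.e. an equivariant ring isomorphism `B ≅ Ind_H^G C`,
where `C` is the henselization of the local ring `O_{X,x} = A_m`. -/
theorem equivariant_henselization_along_orbit
    (G : Type u) [Group G] [Finite G] (A : Type u) [CommRing A] [MulSemiringAction G A]
    (m : Ideal A) [m.IsMaximal]
    (horb : ∀ m' : Ideal A, m'.IsMaximal →
      ∃ g : G, m' = Ideal.comap (MulSemiringAction.toRingHom G A g) m)
    (H : Subgroup G)
    (hH : ∀ g : G, g ∈ H ↔ Ideal.comap (MulSemiringAction.toRingHom G A g) m = m)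
    (B : Type u) [CommRing B] [Algebra A B]
    (hB : IsHenselization A B (⨅ g : G, Ideal.comap (MulSemiringAction.toRingHom G A g) m))
    (C : Type u) [CommRing C] [Algebra (Localization.AtPrime m) C]
    (hC : IsHenselization (Localization.AtPrime m) C
      (IsLocalRing.maximalIdeal (Localization.AtPrime m))) :
    ∃ (σ : G →* (B ≃+* B)) (τ : H →* (C ≃+* C))
      (ι : B ≃+* (IndRing G H C τ)),
      (∀ (g : G) (a : A), σ g (algebraMap A B a) = algebraMap A B (g • a)) ∧
      (∀ (h : H) (a : A),
        τ h ((algebraMap (Localization.AtPrime m) C) (algebraMap A (Localization.AtPrime m) a))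
          = (algebraMap (Localization.AtPrime m) C)
              (algebraMap A (Localization.AtPrime m) ((h : G) • a))) ∧
      (∀ (a : A) (g : G),
        ((ι (algebraMap A B a) : G → C) g)
          = (algebraMap (Localization.AtPrime m) C)
              (algebraMap A (Localization.AtPrime m) (g⁻¹ • a))) ∧
      (∀ (g : G) (b : B) (g' : G),
        ((ι (σ g b) : G → C) g') = ((ι b : G → C) (g⁻¹ * g'))) := by
  classical
  set ψ : A →+* C := (algebraMap (Localization.AtPrime m) C).comp
    (algebraMap A (Localization.AtPrime m)) with hψdef
  have hψ : IsHensHom ψ m := IsHensHom.of_localization m _ hC.isHensHom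
  let act : G → (A ≃+* A) := fun g => MulSemiringAction.toRingEquiv G A g
  have hact : ∀ g a, act g a = g • a := fun g a => rfl
  have htw : ∀ g, IsHensHom (ψ.comp (act g : A →+* A))
      (Ideal.comap (MulSemiringAction.toRingHom G A g) m) := fun g => hψ.twist (act g)
  have htwH : ∀ h : H, IsHensHom (ψ.comp (act (h : G) : A →+* A)) m := by
    intro h
    have := htw (h : G)
    rwa [(hH (h : G)).1 h.2] at this
  -- the action of the stabilizer on `C`
  choose t ht using fun h : H => hψ.exists_equiv (htwH h)
  have ht' : ∀ (h : H) (a : A), t h (ψ a) = ψ ((h : G) • a) := fun h a => ht h a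
  have htuniq : ∀ (h : H) (s : C ≃+* C), (∀ a, s (ψ a) = ψ ((h : G) • a)) → s = t h := by
    intro h s hs
    have h1 := hψ.hom_ext (htwH h) (s : C →+* C) (t h : C →+* C)
      (RingHom.ext fun a => hs a) (RingHom.ext fun a => ht' h a)
    exact RingEquiv.ext fun c => congrArg (fun k => k c) h1
  let τ : H →* (C ≃+* C) :=
    { toFun := t
      map_one' := by
        symm
        refine htuniq 1 1 ?_
        intro a
        simp
      map_mul' := by
        intro h h'
        symm
        refine htuniq (h * h') (t h * t h') ?_
        intro a
        show t h (t h' (ψ a)) = _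
        rw [ht', ht', Subgroup.coe_mul, mul_smul] }
  have hτ : ∀ (h : H) (a : A), τ h (ψ a) = ψ ((h : G) • a) := fun h a => ht' h a
  -- the structure map of the induced ring
  let F : A →+* IndRing G H C τ :=
    (RingHom.pi fun g : G => ψ.comp (act g⁻¹ : A →+* A)).codRestrict (IndRing G H C τ) (by
      intro a h g
      show ψ ((g * h)⁻¹ • a) = τ h⁻¹ (ψ (g⁻¹ • a))
      rw [hτ, mul_inv_rev, mul_smul, Subgroup.coe_inv])
  have hF : ∀ a g, ((F a : G → C) g) = ψ (g⁻¹ • a) := fun a g => rfl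
  -- the induced ring is a product over the cosets
  let r : IndRing G H C τ →+* (G ⧸ H → C) :=
    { toFun := fun φ q => (φ : G → C) q.out
      map_one' := rfl
      map_zero' := rfl
      map_add' := fun _ _ => rfl
      map_mul' := fun _ _ => rfl }
  let hh : G → H := fun g => ⟨((g : G ⧸ H).out)⁻¹ * g, by
    rw [← QuotientGroup.eq, QuotientGroup.out_eq']⟩
  have hhg : ∀ g : G, ((g : G ⧸ H).out) * (hh g : G) = g := fun g => by
    show _ * (_ * g) = g
    rw [mul_inv_cancel_left]
  have hrbij : Function.Bijective r := by
    constructor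
    · intro φ φ' hφ
      ext g
      have h1 : ∀ θ : IndRing G H C τ, (θ : G → C) g = τ (hh g)⁻¹ (r θ (g : G ⧸ H)) := by
        intro θ
        have := θ.2 (hh g) ((g : G ⧸ H).out)
        rw [hhg] at this
        exact this
      rw [h1, h1, hφ]
    · intro f
      refine ⟨⟨fun g => τ (hh g)⁻¹ (f (g : G ⧸ H)), ?_⟩, ?_⟩
      · intro h g
        have hq : ((g * h : G) : G ⧸ H) = (g : G ⧸ H) := by
          rw [eq_comm, QuotientGroup.eq]; simp
        have h1 : hh (g * h) = hh g * h := by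
          apply Subtype.ext
          show (((g * h : G) : G ⧸ H).out)⁻¹ * (g * h) = ((g : G ⧸ H).out)⁻¹ * g * h
          rw [hq, mul_assoc]
        show τ (hh (g * h))⁻¹ (f ((g * h : G) : G ⧸ H)) = τ h⁻¹ (τ (hh g)⁻¹ (f (g : G ⧸ H)))
        rw [h1, hq, mul_inv_rev, map_mul]
        rfl
      · funext q
        show τ (hh q.out)⁻¹ (f ((q.out : G) : G ⧸ H)) = f q
        have h1 : hh q.out = 1 := by
          apply Subtype.ext
          show (((q.out : G) : G ⧸ H).out)⁻¹ * q.out = 1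
          rw [QuotientGroup.out_eq', inv_mul_cancel]
        rw [h1, QuotientGroup.out_eq', inv_one, map_one]
        rfl
  let R : IndRing G H C τ ≃+* (G ⧸ H → C) := RingEquiv.ofBijective r hrbij
  -- the orbit ideals
  let M : G ⧸ H → Ideal A := fun q => Ideal.comap (MulSemiringAction.toRingHom G A q.out⁻¹) m
  have hMmax : ∀ g : G, (Ideal.comap (MulSemiringAction.toRingHom G A g) m).IsMaximal := fun g =>
    Ideal.comap_isMaximal_of_surjective (MulSemiringAction.toRingHom G A g) (act g).surjective
  have hmemM : ∀ (g : G) (a : A),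
      a ∈ Ideal.comap (MulSemiringAction.toRingHom G A g) m ↔ g • a ∈ m := fun g a => Iff.rfl
  have hHmem : ∀ h : H, ∀ a : A, (h : G) • a ∈ m ↔ a ∈ m := by
    intro h a
    rw [← hmemM, (hH (h : G)).1 h.2]
  have hM : Pairwise fun i j => IsCoprime (M i) (M j) := by
    intro p q hpq
    have := hMmax p.out⁻¹
    have := hMmax q.out⁻¹
    refine Ideal.isCoprime_of_isMaximal ?_
    intro heq
    apply hpq
    rw [← QuotientGroup.out_eq' p, ← QuotientGroup.out_eq' q, QuotientGroup.eq, hH]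
    ext a
    have h1 : q.out • a ∈ M p ↔ q.out • a ∈ M q := by
      rw [heq]
    change _ ∈ Ideal.comap _ _ ↔ _ ∈ Ideal.comap _ _ at h1
    rw [hmemM, hmemM, inv_smul_smul, ← mul_smul] at h1
    rw [hmemM]
    exact h1
  have hMinf : ⨅ q, M q = ⨅ g : G, Ideal.comap (MulSemiringAction.toRingHom G A g) m := by
    ext a
    rw [Ideal.mem_iInf, Ideal.mem_iInf]
    constructor
    · intro h g
      have h1 := h ((g⁻¹ : G) : G ⧸ H)
      rw [hmemM] at h1 ⊢
      have h2 : (hh g⁻¹ : G)⁻¹ * (((g⁻¹ : G) : G ⧸ H).out)⁻¹ = g := by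
        rw [← mul_inv_rev, hhg, inv_inv]
      rw [← h2, mul_smul, ← Subgroup.coe_inv, hHmem]
      exact h1
    · intro h q
      exact h _
  have hprod : IsHensHom (RingHom.pi fun q : G ⧸ H => ψ.comp (act q.out⁻¹ : A →+* A))
      (⨅ q, M q) := IsHensHom.pi M hM _ fun q => htw q.out⁻¹
  rw [hMinf] at hprod
  have hInd : IsHensHom F (⨅ g : G, Ideal.comap (MulSemiringAction.toRingHom G A g) m) := by
    refine hprod.trans_equiv R.symm F ?_
    intro a
    rw [RingEquiv.eq_symm_apply]
    rfl
  obtain ⟨ι, hι⟩ := hB.isHensHom.exists_equiv hInd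
  -- translation action on the induced ring
  let T0 : G → IndRing G H C τ →+* IndRing G H C τ := fun g =>
    { toFun := fun φ => ⟨fun g' => (φ : G → C) (g⁻¹ * g'), by
        intro h g'
        show (φ : G → C) (g⁻¹ * (g' * h)) = _
        rw [← mul_assoc]
        exact φ.2 h (g⁻¹ * g')⟩
      map_one' := rfl
      map_zero' := rfl
      map_add' := fun _ _ => rfl
      map_mul' := fun _ _ => rfl }
  have hT0 : ∀ g φ g', ((T0 g φ : G → C) g') = (φ : G → C) (g⁻¹ * g') := fun _ _ _ => rfl
  have hT0one : ∀ φ, T0 1 φ = φ := by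
    intro φ
    ext g'
    rw [hT0, inv_one, one_mul]
  have hT0mul : ∀ g k φ, T0 (g * k) φ = T0 g (T0 k φ) := by
    intro g k φ
    ext g'
    rw [hT0, hT0, hT0, mul_inv_rev, mul_assoc]
  let T : G → (IndRing G H C τ ≃+* IndRing G H C τ) := fun g =>
    RingEquiv.ofRingHom (T0 g) (T0 g⁻¹)
      (RingHom.ext fun φ => by
        show T0 g (T0 g⁻¹ φ) = φ
        rw [← hT0mul, mul_inv_cancel, hT0one])
      (RingHom.ext fun φ => by
        show T0 g⁻¹ (T0 g φ) = φ
        rw [← hT0mul, inv_mul_cancel, hT0one])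
  have hT : ∀ g φ, T g φ = T0 g φ := fun _ _ => rfl
  let σ : G →* (B ≃+* B) :=
    { toFun := fun g => (ι.trans (T g)).trans ι.symm
      map_one' := by
        ext b
        show ι.symm (T0 1 (ι b)) = b
        rw [hT0one, RingEquiv.symm_apply_apply]
      map_mul' := by
        intro g k
        ext b
        show ι.symm (T0 (g * k) (ι b)) = ι.symm (T0 g (ι (ι.symm (T0 k (ι b)))))
        rw [hT0mul, RingEquiv.apply_symm_apply] }
  have hσ : ∀ g b, ι (σ g b) = T0 g (ι b) := by
    intro g b
    show ι (ι.symm (T0 g (ι b))) = _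
    rw [RingEquiv.apply_symm_apply]
  refine ⟨σ, τ, ι, ?_, hτ, ?_, ?_⟩
  · intro g a
    apply ι.injective
    rw [hσ, hι, hι]
    ext g'
    rw [hT0, hF, hF, mul_inv_rev, inv_inv, mul_smul]
  · intro a g
    rw [hι]
    exact hF a g
  · intro g b g'
    rw [hσ, hT0]
end

section
/- Let G be a finite group acting on a scheme X over a field such that the geometric quotient π : X → X/G exists as a scheme, and let x ∈ X. Then the quotient (X^h_{Gx})/G of the equivariant Henselization along the orbit G·x is naturally isomorphic to the Henselization (X/G)^h_{[x]} of X/G at the image point [x]. -/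
universe u

/-- The subring of `G`-fixed elements. -/
def fixedSubring (G R : Type*) [Group G] [CommRing R] [MulSemiringAction G R] : Subring R where
  carrier := {a | ∀ g : G, g • a = a}
  zero_mem' := fun g => smul_zero g
  one_mem' := fun g => smul_one g
  add_mem' := fun {a b} ha hb g => by rw [smul_add, ha g, hb g]
  mul_mem' := fun {a b} ha hb g => by rw [smul_mul', ha g, hb g]
  neg_mem' := fun {a} ha g => by rw [smul_neg, ha g]

/-- The restriction of an equivariant algebra map to fixed subrings. -/
def fixedMap {G A B : Type*} [Group G] [CommRing A] [CommRing B] [Algebra A B]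
    [MulSemiringAction G A] [MulSemiringAction G B]
    (hcompat : ∀ (g : G) (a : A), algebraMap A B (g • a) = g • algebraMap A B a) :
    fixedSubring G A →+* fixedSubring G B :=
  RingHom.codRestrict ((algebraMap A B).comp (fixedSubring G A).subtype) (fixedSubring G B)
    (fun x g => by
      show g • algebraMap A B x.1 = algebraMap A B x.1
      rw [← hcompat, x.2 g])

section Helpers

open Polynomial TensorProduct

theorem eval_sub_eq_mul {S : Type*} [CommRing S] (f : S[X]) (a b : S) :
    ∃ c, f.eval a = f.eval b + (a - b) * (f.derivative.eval b + (a - b) * c) := by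
  obtain ⟨c, hc⟩ := Polynomial.binomExpansion f b (a - b)
  refine ⟨c, ?_⟩
  rw [add_sub_cancel] at hc
  rw [hc]; ring

theorem isUnit_of_mk {S : Type*} [CommRing S] {J : Ideal S} (hJ : J ≤ Ideal.jacobson ⊥) {x : S}
    (hx : IsUnit (Ideal.Quotient.mk J x)) : IsUnit x := by
  haveI := isLocalHom_of_le_jacobson_bot J hJ
  exact (isUnit_map_iff (Ideal.Quotient.mk J) x).mp hx

theorem isUnit_add_of_mem {S : Type*} [CommRing S] {J : Ideal S} (hJ : J ≤ Ideal.jacobson ⊥)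
    {x y : S} (hx : IsUnit x) (hy : y ∈ J) : IsUnit (x + y) := by
  apply isUnit_of_mk hJ
  rw [map_add, Ideal.Quotient.eq_zero_iff_mem.mpr hy, add_zero]
  exact hx.map _

theorem HenselianRing.of_le {S : Type*} [CommRing S] {J J' : Ideal S} (h : HenselianRing S J)
    (hle : J' ≤ J) : HenselianRing S J' where
  jac := hle.trans h.jac
  is_henselian f hf a₀ h0 h1 := by
    have hu : IsUnit (f.derivative.eval a₀) := isUnit_of_mk (hle.trans h.jac) h1
    obtain ⟨a, ha, haa⟩ := h.is_henselian f hf a₀ (hle h0) (hu.map _)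
    refine ⟨a, ha, ?_⟩
    obtain ⟨c, hc⟩ := eval_sub_eq_mul f a a₀
    have hv := isUnit_add_of_mem h.jac hu (J.mul_mem_right c haa)
    obtain ⟨v, hv⟩ := hv
    rw [← hv, ha.eq_zero] at hc
    have : a - a₀ = - (f.eval a₀ * ↑v⁻¹) := by
      have h2 : (a - a₀) * ↑v = - f.eval a₀ := by linear_combination -hc
      calc a - a₀ = (a - a₀) * ↑v * ↑v⁻¹ := by simp [mul_assoc]
        _ = _ := by rw [h2]; ring
    rw [this]
    exact J'.neg_mem (J'.mul_mem_right _ h0)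

/-- uniqueness of Hensel lift -/
theorem HenselianRing.root_unique {S : Type*} [CommRing S] {J : Ideal S}
    (hJ : J ≤ Ideal.jacobson ⊥) (f : S[X])
    (a b : S) (ha : f.eval a = 0) (hb : f.eval b = 0) (hab : a - b ∈ J)
    (hu : IsUnit (f.derivative.eval b)) : a = b := by
  obtain ⟨c, hc⟩ := eval_sub_eq_mul f a b
  have hv := isUnit_add_of_mem hJ hu (J.mul_mem_right c hab)
  rw [ha, hb, zero_add] at hc
  exact sub_eq_zero.mp ((hv.mul_left_eq_zero).mp hc.symm)

theorem unramified_algHom_unique {R S C : Type*} [CommRing R] [CommRing S] [CommRing C]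
    [Algebra R S] [Algebra R C] [Algebra.EssFiniteType R S] [Algebra.FormallyUnramified R S]
    (J : Ideal C) (hJ : J ≤ Ideal.jacobson ⊥) (φ ψ : S →ₐ[R] C) (h : ∀ s, φ s - ψ s ∈ J) :
    φ = ψ := by
  obtain ⟨t, ht, ht1⟩ := Algebra.FormallyUnramified.iff_exists_tensorProduct.mp
    (inferInstance : Algebra.FormallyUnramified R S)
  let Φ : S ⊗[R] S →ₐ[R] C := Algebra.TensorProduct.lift φ ψ (fun _ _ => .all _ _)
  have key : ∀ z : S ⊗[R] S, Φ z - ψ (Algebra.TensorProduct.lmul' R z) ∈ J := by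
    intro z
    induction z with
    | zero => simp
    | tmul x y =>
      simp only [Φ, Algebra.TensorProduct.lift_tmul, Algebra.TensorProduct.lmul'_apply_tmul,
        map_mul, ← sub_mul]
      exact J.mul_mem_right _ (h x)
    | add x y hx hy =>
      rw [map_add, map_add, map_add, add_sub_add_comm]
      exact J.add_mem hx hy
  have hu : IsUnit (Φ t) := by
    have := isUnit_add_of_mem hJ isUnit_one (key t)
    have h1 : Algebra.TensorProduct.lmul' R t = (1 : S) := by simpa using! ht1
    rwa [h1, map_one, add_sub_cancel] at this
  ext s
  have := congrArg Φ (ht s)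
  simp only [map_mul, map_sub, Φ, Algebra.TensorProduct.lift_tmul, map_one, map_zero, one_mul,
    mul_one] at this
  exact (sub_eq_zero.mp ((hu.mul_left_eq_zero).mp this)).symm

theorem etale_exists_standard {R E k : Type*} [CommRing R] [CommRing E] [Field k] [Algebra R E]
    [Algebra R k] [Algebra.Etale R E] (pt : E →ₐ[R] k) :
    ∃ (P : StandardEtalePair R) (φ : E →ₐ[R] P.Ring) (pt' : P.Ring →ₐ[R] k), pt'.comp φ = pt := by
  have hQ : (RingHom.ker pt).IsPrime := RingHom.ker_isPrime _
  obtain ⟨f, hf, hs⟩ := Algebra.IsEtaleAt.exists_isStandardEtale (R := R) (RingHom.ker pt)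
  obtain ⟨⟨P⟩⟩ := hs
  have hu : IsUnit (pt f) := by
    rw [isUnit_iff_ne_zero]; exact hf
  let pt1 : Localization.Away f →ₐ[R] k := IsLocalization.Away.liftAlgHom f hu
  refine ⟨P.P, (P.equivRing : _ →ₐ[R] _).comp (IsScalarTower.toAlgHom R E (Localization.Away f)),
    pt1.comp (P.equivRing.symm : _ →ₐ[R] _), ?_⟩
  ext x
  simp [pt1]

theorem standard_lift {R C : Type*} [CommRing R] [CommRing C] [Algebra R C] {J : Ideal C}
    (hJ : HenselianRing C J) (P : StandardEtalePair R) (a : C)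
    (ha : P.HasMap (Ideal.Quotient.mk J a)) : ∃ φ : P.Ring →ₐ[R] C, φ P.X - a ∈ J := by
  have e : ∀ p : R[X], aeval (Ideal.Quotient.mk J a) p =
      Ideal.Quotient.mk J ((p.map (algebraMap R C)).eval a) := by
    intro p
    rw [Polynomial.eval_map_algebraMap]
    exact (aeval_algHom_apply (Ideal.Quotient.mkₐ R J) a p)
  obtain ⟨b, hb, hba⟩ := hJ.is_henselian (P.f.map (algebraMap R C)) (P.monic_f.map _) a
    (by rw [← Ideal.Quotient.eq_zero_iff_mem, ← e]; exact ha.1)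
    (by rw [Polynomial.derivative_map, ← e]; exact ha.isUnit_derivative_f)
  have hab : Ideal.Quotient.mk J b = Ideal.Quotient.mk J a := Ideal.Quotient.eq.mpr hba
  have hm : P.HasMap b := by
    refine ⟨by simpa [Polynomial.eval_map_algebraMap] using hb.eq_zero, ?_⟩
    apply isUnit_of_mk hJ.jac
    have h2 : Ideal.Quotient.mk J (aeval b P.g) = aeval (Ideal.Quotient.mk J b) P.g :=
      (aeval_algHom_apply (Ideal.Quotient.mkₐ R J) b P.g).symm
    rw [h2, hab]
    exact ha.2
  exact ⟨P.lift b hm, by simpa using hba⟩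

theorem HenselianLocalRing.toHenselianRing {H : Type*} [CommRing H] [HenselianLocalRing H] :
    HenselianRing H (IsLocalRing.maximalIdeal H) where
  jac := by rw [IsLocalRing.jacobson_eq_maximalIdeal ⊥ bot_ne_top]
  is_henselian f hf a h0 h1 := HenselianLocalRing.is_henselian f hf a h0
    (isUnit_of_mk (by rw [IsLocalRing.jacobson_eq_maximalIdeal ⊥ bot_ne_top]) h1)

theorem HenselianLocalRing.etale_lift {H E : Type*} [CommRing H] [HenselianLocalRing H]
    [CommRing E] [Algebra H E] [Algebra.Etale H E] (pt : E →ₐ[H] IsLocalRing.ResidueField H) :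
    ∃ φ : E →ₐ[H] H, ∀ x, IsLocalRing.residue H (φ x) = pt x := by
  obtain ⟨P, φ, pt', rfl⟩ := etale_exists_standard pt
  obtain ⟨a, ha⟩ := IsLocalRing.residue_surjective (pt' P.X)
  obtain ⟨ψ, hψ⟩ := standard_lift (HenselianLocalRing.toHenselianRing (H := H)) P a (by
    have := P.hasMap_X.map pt'
    rw [← ha] at this
    exact this)
  refine ⟨ψ.comp φ, fun x => ?_⟩
  let ρ : H →ₐ[H] IsLocalRing.ResidueField H := Algebra.ofId _ _
  have : ρ.comp ψ = pt' := by
    apply P.hom_ext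
    rw [← ha]
    have := Ideal.Quotient.eq.mpr hψ
    exact this
  exact DFunLike.congr_fun this (φ x)

theorem HenselianLocalRing.factor {H : Type*} [CommRing H] [HenselianLocalRing H]
    (p : H[X]) (hp : p.Monic) (f g : (IsLocalRing.ResidueField H)[X]) (hf : f.Monic) (hg : g.Monic)
    (h : p.map (IsLocalRing.residue H) = f * g) (hc : IsCoprime f g) :
    ∃ F G : H[X], p = F * G ∧ F.map (IsLocalRing.residue H) = f ∧
      G.map (IsLocalRing.residue H) = g ∧ IsCoprime F G := by
  have hn : p.natDegree = f.natDegree + g.natDegree := by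
    rw [← hf.natDegree_mul hg, ← h, hp.natDegree_map]
  let p' : MonicDegreeEq H p.natDegree := .mk p hp rfl
  let f' : MonicDegreeEq (IsLocalRing.ResidueField H) f.natDegree := .mk f hf rfl
  let g' : MonicDegreeEq (IsLocalRing.ResidueField H) g.natDegree := .mk g hg rfl
  let e := UniversalCoprimeFactorizationRing.homEquiv (IsLocalRing.ResidueField H)
    f.natDegree g.natDegree hn p'
  let e' := UniversalCoprimeFactorizationRing.homEquiv H f.natDegree g.natDegree hn p'
  obtain ⟨φ, hφ⟩ := HenselianLocalRing.etale_lift (e.symm ⟨(f', g'), h.symm, hc⟩)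
  have hφ' : (Algebra.ofId H (IsLocalRing.ResidueField H)).comp φ =
    e.symm ⟨(f', g'), h.symm, hc⟩ := AlgHom.ext hφ
  refine ⟨(e' φ).1.1.1, (e' φ).1.2.1, ?_, ?_, ?_, (e' φ).2.2⟩
  · have := (e' φ).2.1
    simpa [p'] using! this.symm
  · have := UniversalCoprimeFactorizationRing.homEquiv_comp_fst H
      f.natDegree g.natDegree hn p' φ (Algebra.ofId H (IsLocalRing.ResidueField H))
    rw [hφ'] at this
    have h3 : (e (e.symm ⟨(f', g'), h.symm, hc⟩)).1.1 = f' := by rw [Equiv.apply_symm_apply]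
    exact (congrArg Subtype.val (h3.symm.trans this)).symm
  · have := UniversalCoprimeFactorizationRing.homEquiv_comp_snd H
      f.natDegree g.natDegree hn p' φ (Algebra.ofId H (IsLocalRing.ResidueField H))
    rw [hφ'] at this
    have h3 : (e (e.symm ⟨(f', g'), h.symm, hc⟩)).1.2 = g' := by rw [Equiv.apply_symm_apply]
    exact (congrArg Subtype.val (h3.symm.trans this)).symm

theorem HenselianLocalRing.idempotent_lift {H T : Type*} [CommRing H] [HenselianLocalRing H]
    [CommRing T] [Algebra H T] [Algebra.IsIntegral H T] (b : T)
    (hb : b * b - b ∈ ((IsLocalRing.maximalIdeal H).map (algebraMap H T)).radical) :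
    ∃ e : T, e * e = e ∧ e - b ∈ ((IsLocalRing.maximalIdeal H).map (algebraMap H T)).radical := by
  set N := ((IsLocalRing.maximalIdeal H).map (algebraMap H T)).radical with hN
  obtain ⟨p0, hp0, hp0b⟩ := Algebra.IsIntegral.isIntegral (R := H) b
  let p : H[X] := (X - C 1) * (X * p0)
  have hp : p.Monic := (monic_X_sub_C 1).mul (monic_X.mul hp0)
  have hpb : aeval b p = 0 := by
    have : aeval b p0 = 0 := hp0b
    simp [p, this]
  let k := IsLocalRing.ResidueField H
  let pb : k[X] := p.map (IsLocalRing.residue H)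
  have hpb0 : pb ≠ 0 := (hp.map _).ne_zero
  obtain ⟨q, hq, hqn⟩ := exists_eq_pow_rootMultiplicity_mul_and_not_dvd pb hpb0 0
  set r := rootMultiplicity 0 pb with hr
  have hr1 : 0 < r := by
    rw [hr, rootMultiplicity_pos hpb0]
    simp [pb, p, IsRoot]
  rw [C_0, sub_zero] at hq hqn
  have hqm : q.Monic := by
    have h1 : pb.Monic := hp.map _
    rw [hq] at h1
    exact (monic_X_pow r).of_mul_monic_left h1
  have hq1 : q.eval 1 = 0 := by
    have h1 : pb.eval 1 = 0 := by simp [pb, p]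
    rw [hq] at h1
    simpa using h1
  have hco : IsCoprime (X ^ r : k[X]) q :=
    IsCoprime.pow_left ((irreducible_X.coprime_iff_not_dvd).mpr hqn)
  obtain ⟨F, G, hFG, hF, hG, u, v, huv⟩ :=
    HenselianLocalRing.factor p hp (X ^ r) q (monic_X_pow r) hqm hq hco
  refine ⟨aeval b (u * F), ?_, ?_⟩
  · have h1 : aeval b (u * F) + aeval b (v * G) = 1 := by
      rw [← map_add, huv, map_one]
    have h2 : aeval b (u * F) * aeval b (v * G) = 0 := by
      rw [← map_mul, show u * F * (v * G) = u * v * (F * G) by ring, ← hFG, map_mul, hpb, mul_zero]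
    linear_combination (aeval b (u * F)) * h1 - h2
  · rw [← Ideal.Quotient.eq_zero_iff_mem, map_sub, sub_eq_zero]
    let π := Ideal.Quotient.mk N
    have hbb : π b * π b = π b := by
      rw [← map_mul, ← sub_eq_zero, ← map_sub]
      exact Ideal.Quotient.eq_zero_iff_mem.mpr hb
    let σ : k →+* T ⧸ N := Ideal.Quotient.lift _ (π.comp (algebraMap H T)) (by
      intro a ha
      exact Ideal.Quotient.eq_zero_iff_mem.mpr (Ideal.le_radical (Ideal.mem_map_of_mem _ ha)))
    have hσ : σ.comp (IsLocalRing.residue H) = π.comp (algebraMap H T) := by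
      ext x; rfl
    have key : ∀ P : H[X], π (aeval b P) = eval₂ σ (π b) (P.map (IsLocalRing.residue H)) := by
      intro P
      rw [eval₂_map, hσ, ← hom_eval₂]; rfl
    have hF' : π (aeval b F) = π b := by
      rw [key, hF, eval₂_X_pow]
      exact IsIdempotentElem.pow_eq hbb hr1.ne'
    have hG' : π b * π (aeval b G) = 0 := by
      obtain ⟨q', hq'⟩ := dvd_iff_isRoot.mpr hq1
      rw [key, hG, hq', eval₂_mul, eval₂_sub, eval₂_X, eval₂_C, map_one, ← mul_assoc, mul_sub, hbb]
      simp
    have h1 : π (aeval b u) * π (aeval b F) + π (aeval b v) * π (aeval b G) = 1 := by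
      simpa using congrArg (fun z => π (aeval b z)) huv
    change π (aeval b (u * F)) = π b
    rw [map_mul, map_mul, hF']
    rw [hF'] at h1
    linear_combination π b * h1 - π (aeval b u) * hbb - π (aeval b v) * hG'

theorem radical_le_jacobson {H T : Type*} [CommRing H] [IsLocalRing H]
    [CommRing T] [Algebra H T] [Algebra.IsIntegral H T] :
    ((IsLocalRing.maximalIdeal H).map (algebraMap H T)).radical ≤ Ideal.jacobson ⊥ := by
  intro x hx
  rw [Ideal.jacobson, Ideal.mem_sInf]
  rintro M ⟨-, hM⟩
  have := Ideal.isMaximal_comap_of_isIntegral_of_isMaximal (R := H) M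
  have h1 := IsLocalRing.eq_maximalIdeal this
  have h2 : (IsLocalRing.maximalIdeal H).map (algebraMap H T) ≤ M := by
    rw [Ideal.map_le_iff_le_comap, h1]
  exact (hM.isPrime.radical_le_iff.mpr h2) hx

theorem idem_eq_of_nilpotent {T : Type*} [CommRing T] {e b : T} (he : e * e = e) (hb : b * b = b)
    (h : IsNilpotent (e - b)) : e = b := by
  have h1 : (e - b) * (1 - (e - b) ^ 2) = 0 := by
    have : (e - b) ^ 2 = e + b - 2 * (e * b) := by linear_combination he + hb
    rw [this]
    linear_combination (2 * b - 1) * he + (1 - 2 * e) * hb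
  have hu : IsUnit (1 - (e - b) ^ 2) := (h.pow_of_pos two_ne_zero).isUnit_one_sub
  exact sub_eq_zero.mp ((hu.mul_left_eq_zero).mp h1)

theorem henselianRing_of_isIntegral {H S : Type*} [CommRing H] [HenselianLocalRing H]
    [CommRing S] [Algebra H S] [Algebra.IsIntegral H S] :
    HenselianRing S ((IsLocalRing.maximalIdeal H).map (algebraMap H S)).radical where
  jac := radical_le_jacobson
  is_henselian f hf a₀ h0 h1 := by
    set J := ((IsLocalRing.maximalIdeal H).map (algebraMap H S)).radical with hJdef
    have hJ : J ≤ Ideal.jacobson ⊥ := radical_le_jacobson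
    nontriviality S
    obtain ⟨u, hu⟩ := isUnit_of_mk hJ h1
    let T := AdjoinRoot f
    have hfin : Module.Finite S T := hf.finite_adjoinRoot
    have h_integral : Algebra.IsIntegral S T := inferInstance
    have hint2 : Algebra.IsIntegral H T := Algebra.IsIntegral.trans S
    let x : T := AdjoinRoot.root f
    let κ : S →+* T := algebraMap S T
    let J1 : Ideal T := J.map κ
    let g : S[X] := f /ₘ (X - C a₀)
    have hfg : f = (X - C a₀) * g + C (f.eval a₀) := by
      have := X_sub_C_mul_divByMonic_eq_sub_modByMonic f a₀
      rw [modByMonic_X_sub_C_eq_C_eval] at this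
      simp only [g]
      linear_combination -this
    have hga : g.eval a₀ = u := by
      have := congrArg (fun z => (derivative z).eval a₀) hfg
      simp at this
      rw [hu, this]
    have hx : aeval x f = 0 := by
      rw [AdjoinRoot.aeval_eq, AdjoinRoot.mk_self]
    have hxg : (x - κ a₀) * aeval x g = - κ (f.eval a₀) := by
      have := congrArg (aeval x) hfg
      simp only [hx, map_add, map_mul, map_sub, aeval_X, aeval_C] at this
      linear_combination -this
    obtain ⟨c, hc⟩ : ∃ c : S[X], g - C (g.eval a₀) = (X - C a₀) * c := X_sub_C_dvd_sub_C_eval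
    have hc' : aeval x g = κ u + (x - κ a₀) * aeval x c := by
      have := congrArg (aeval x) hc
      simp only [hga, map_mul, map_sub, aeval_X, aeval_C] at this
      linear_combination this
    have hJ1 : κ (f.eval a₀) ∈ J1 := Ideal.mem_map_of_mem _ h0
    have huu : κ ↑u⁻¹ * κ ↑u = 1 := by rw [← map_mul]; simp
    let b : T := κ ↑u⁻¹ * aeval x g
    have hbJ : b * b - b ∈ J1 := by
      have : b * b - b = κ ↑u⁻¹ * κ ↑u⁻¹ * aeval x c * (- κ (f.eval a₀)) := by
        rw [← hxg]
        simp only [b]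
        linear_combination (κ ↑u⁻¹ * κ ↑u⁻¹ * aeval x g) * hc' + (κ ↑u⁻¹ * aeval x g) * huu
      rw [this]
      exact J1.mul_mem_left _ (J1.neg_mem hJ1)
    have hmap : (IsLocalRing.maximalIdeal H).map (algebraMap H T) =
        ((IsLocalRing.maximalIdeal H).map (algebraMap H S)).map κ := by
      rw [Ideal.map_map]; rfl
    have hJ1le : J1 ≤ ((IsLocalRing.maximalIdeal H).map (algebraMap H T)).radical := by
      rw [hmap]
      exact Ideal.map_radical_le _
    have hJ1ge : ((IsLocalRing.maximalIdeal H).map (algebraMap H T)).radical ≤ J1.radical := by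
      rw [hmap]
      exact Ideal.radical_mono (Ideal.map_mono Ideal.le_radical)
    obtain ⟨e, he, heb⟩ := HenselianLocalRing.idempotent_lift (H := H) b (hJ1le hbJ)
    have heb1 : e - b ∈ J1 := by
      have h2 : Ideal.Quotient.mk J1 e = Ideal.Quotient.mk J1 b := by
        apply idem_eq_of_nilpotent
        · rw [← map_mul, he]
        · rw [← map_mul]; exact Ideal.Quotient.eq.mpr hbJ
        · obtain ⟨n, hn⟩ := hJ1ge heb
          exact ⟨n, by rw [← map_sub, ← map_pow]; exact Ideal.Quotient.eq_zero_iff_mem.mpr hn⟩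
      exact Ideal.Quotient.eq.mp h2
    have hxe : (x - κ a₀) * e ∈ J1 := by
      have : (x - κ a₀) * e = (x - κ a₀) * (e - b) + κ ↑u⁻¹ * (- κ (f.eval a₀)) := by
        rw [← hxg]; simp only [b]; ring
      rw [this]
      exact J1.add_mem (J1.mul_mem_left _ heb1) (J1.mul_mem_left _ (J1.neg_mem hJ1))
    have hJtop : (J • ⊤ : Submodule S T) = J1.restrictScalars S := Ideal.smul_top_eq_map J
    let μ : T →ₗ[S] T := LinearMap.mulLeft S e
    let M : Submodule S T := Submodule.map μ ⊤
    have hMfg : M.FG := (Module.Finite.fg_top (R := S) (M := T)).map μ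
    have hM : M ≤ Submodule.span S {e} ⊔ J • M := by
      rintro _ ⟨t, -, rfl⟩
      obtain ⟨p, rfl⟩ := AdjoinRoot.mk_surjective t
      obtain ⟨c', hc'⟩ : ∃ c' : S[X], p - C (p.eval a₀) = (X - C a₀) * c' :=
        X_sub_C_dvd_sub_C_eval
      have h3 : AdjoinRoot.mk f p = κ (p.eval a₀) + (x - κ a₀) * aeval x c' := by
        have := congrArg (aeval x) hc'
        simp only [map_mul, map_sub, aeval_X, aeval_C] at this
        rw [← AdjoinRoot.aeval_eq]
        linear_combination this
      have h4 : μ (AdjoinRoot.mk f p) = p.eval a₀ • e + μ ((x - κ a₀) * e * aeval x c') := by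
        simp only [μ, LinearMap.mulLeft_apply, h3, Algebra.smul_def]
        change _ = κ _ * e + _
        linear_combination -((x - κ a₀) * aeval x c') * he
      rw [h4]
      refine Submodule.add_mem_sup (Submodule.smul_mem _ _ (Submodule.mem_span_singleton_self e)) ?_
      rw [← Submodule.map_smul'', hJtop]
      exact ⟨_, J1.mul_mem_right _ hxe, rfl⟩
    have hM2 : M ≤ Submodule.span S {e} := Submodule.le_of_le_smul_of_le_jacobson_bot hMfg hJ hM
    obtain ⟨a, ha⟩ := Submodule.mem_span_singleton.mp (hM2 ⟨x, trivial, rfl⟩)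
    have ha' : κ a * e = e * x := by
      rw [Algebra.smul_def] at ha; exact ha
    let ν := AdjoinRoot.modByMonicHom hf
    let n := f.natDegree
    let lam : T →ₗ[S] S := (lcoeff S (n - 1)).comp ν
    have hlam : ∀ j ∈ J1, lam j ∈ J := by
      intro j hj
      have : j ∈ (J • ⊤ : Submodule S T) := by rw [hJtop]; exact hj
      refine Submodule.smul_induction_on this ?_ ?_
      · intro r hr t _
        rw [map_smul]; exact J.mul_mem_right _ hr
      · intro y z hy hz
        rw [map_add]; exact J.add_mem hy hz
    have hn : 0 < n := by
      by_contra hcon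
      have hf1 : f = 1 := hf.natDegree_eq_zero.mp (by omega)
      rw [hf1] at h0
      simp only [eval_one] at h0
      have := (Ideal.mem_jacobson_bot.mp (hJ h0)) (-1)
      simp at this
    have hgm : g.Monic := by
      have hd : (X - C a₀).degree ≤ f.degree := by
        rw [degree_X_sub_C, degree_eq_natDegree hf.ne_zero]
        exact_mod_cast hn
      rw [Monic, leadingCoeff_divByMonic_of_monic (monic_X_sub_C a₀) hd, hf.leadingCoeff]
    have hgd : g.natDegree = n - 1 := by
      simp only [g]
      rw [natDegree_divByMonic _ (monic_X_sub_C a₀), natDegree_X_sub_C]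
    have hf1 : f ≠ 1 := by
      intro h
      have : n = 0 := by simp only [n, h, natDegree_one]
      omega
    have hlamb : lam b = ↑u⁻¹ := by
      have hb' : b = (↑u⁻¹ : S) • AdjoinRoot.mk f g := by
        rw [Algebra.smul_def, ← AdjoinRoot.aeval_eq]
      have hgf : g.degree < f.degree := by
        rw [degree_eq_natDegree hgm.ne_zero, degree_eq_natDegree hf.ne_zero, hgd]
        exact_mod_cast (by omega : n - 1 < n)
      have hν : ν (AdjoinRoot.mk f g) = g := by
        simp only [ν]
        rw [AdjoinRoot.modByMonicHom_mk hf, (modByMonic_eq_self_iff hf).mpr hgf]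
      rw [hb', map_smul]
      simp only [lam, LinearMap.comp_apply, hν, lcoeff_apply, ← hgd, hgm.coeff_natDegree]
      simp
    let E : S[X] := ν e
    have hEe : AdjoinRoot.mk f E = e := AdjoinRoot.mk_leftInverse hf e
    have hEd : E.natDegree < n := by
      have h8 : ν (AdjoinRoot.mk f E) = E %ₘ f := AdjoinRoot.modByMonicHom_mk hf E
      rw [hEe] at h8
      have h9 : E = E %ₘ f := h8
      rw [h9]
      exact natDegree_modByMonic_lt E hf hf1
    have hlame : lam e = E.coeff (n - 1) := rfl
    have hd : IsUnit (lam e) := by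
      have h5 : lam e = ↑u⁻¹ + lam (e - b) := by rw [map_sub, hlamb]; ring
      rw [h5]
      exact isUnit_add_of_mem hJ (Units.isUnit _) (hlam _ heb1)
    obtain ⟨q, hq⟩ : f ∣ (X - C a) * E := by
      rw [← AdjoinRoot.mk_eq_zero, map_mul, hEe, map_sub]
      change (x - κ a) * e = 0
      linear_combination -ha'
    have hqdeg : q.natDegree = 0 := by
      by_cases hq0 : q = 0
      · rw [hq0, natDegree_zero]
      · have h8 := hf.natDegree_mul' hq0
        have h9 : ((X - C a) * E).natDegree ≤ 1 + E.natDegree :=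
          natDegree_mul_le.trans (by rw [natDegree_X_sub_C])
        rw [hq, h8] at h9
        change n + _ ≤ _ at h9
        omega
    have hq0 : q = C (lam e) := by
      rw [eq_C_of_natDegree_eq_zero hqdeg] at hq ⊢
      congr 1
      have h8 := congrArg (fun z => coeff z (n - 1 + 1)) hq
      simp only [sub_mul, coeff_sub, coeff_X_mul, coeff_C_mul, coeff_mul_C] at h8
      rw [Nat.sub_add_cancel hn, coeff_eq_zero_of_natDegree_lt hEd, mul_zero, sub_zero,
        show f.coeff n = 1 from hf.coeff_natDegree, one_mul] at h8
      exact h8.symm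
    have hfa : f.eval a = 0 := by
      have := congrArg (eval a) hq
      rw [hq0] at this
      simp only [eval_mul, eval_sub, eval_X, eval_C, sub_self, zero_mul] at this
      exact (hd.mul_left_eq_zero).mp this.symm
    refine ⟨a, hfa, ?_⟩
    have h6 : (a - a₀) • e ∈ J1 := by
      rw [Algebra.smul_def]
      change κ (a - a₀) * e ∈ J1
      rw [map_sub]
      have : (κ a - κ a₀) * e = (x - κ a₀) * e := by linear_combination ha'
      rwa [this]
    have h7 := hlam _ h6
    rw [map_smul, smul_eq_mul] at h7
    exact (Ideal.mul_unit_mem_iff_mem J hd).mp h7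

open IsLocalRing in
structure HNbd (R : Type u) [CommRing R] [IsLocalRing R] where
  P : StandardEtalePair R
  pt : P.Ring →ₐ[R] ResidueField R

namespace HNbd
variable {R : Type u} [CommRing R] [IsLocalRing R]

instance (i : HNbd R) : (RingHom.ker i.pt).IsPrime := RingHom.ker_isPrime _

abbrev L (i : HNbd R) : Type u := Localization.AtPrime (RingHom.ker i.pt)

instance (i : HNbd R) : Algebra.EssFiniteType R i.L :=
  have : Algebra.EssFiniteType i.P.Ring i.L := .of_isLocalization _ (RingHom.ker i.pt).primeCompl
  .comp R i.P.Ring i.L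

instance (i : HNbd R) : Algebra.FormallyUnramified R i.L :=
  have : Algebra.FormallyUnramified i.P.Ring i.L :=
    .of_isLocalization (RingHom.ker i.pt).primeCompl
  .comp R i.P.Ring i.L

instance (i : HNbd R) : Module.Flat R i.L :=
  have : Module.Flat i.P.Ring i.L := IsLocalization.flat _ (RingHom.ker i.pt).primeCompl
  have : Module.Flat R i.P.Ring := inferInstance
  .trans R i.P.Ring i.L

noncomputable def extend (i : HNbd R) {C : Type*} [CommRing C] [Algebra R C] (φ : i.P.Ring →ₐ[R] C)
    (h : ∀ x, i.pt x ≠ 0 → IsUnit (φ x)) : i.L →ₐ[R] C :=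
  IsLocalization.liftAlgHom (M := (RingHom.ker i.pt).primeCompl) (f := φ) (fun y => h y.1 y.2)

theorem extend_algebraMap (i : HNbd R) {C : Type*} [CommRing C] [Algebra R C]
    (φ : i.P.Ring →ₐ[R] C)
    (h : ∀ x, i.pt x ≠ 0 → IsUnit (φ x)) (x) : i.extend φ h (algebraMap _ _ x) = φ x := by
  simp [extend]

noncomputable def ptL (i : HNbd R) : i.L →ₐ[R] IsLocalRing.ResidueField R :=
  i.extend i.pt (fun _ hx => isUnit_iff_ne_zero.mpr hx)

theorem ptL_algebraMap (i : HNbd R) (x) : i.ptL (algebraMap i.P.Ring i.L x) = i.pt x :=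
  extend_algebraMap _ _ _ _

theorem isUnit_iff (i : HNbd R) (x : i.L) : IsUnit x ↔ i.ptL x ≠ 0 := by
  refine ⟨fun h => (h.map i.ptL).ne_zero, fun h => ?_⟩
  obtain ⟨a, s, rfl⟩ := IsLocalization.exists_mk'_eq (RingHom.ker i.pt).primeCompl x
  rw [IsLocalization.AtPrime.isUnit_mk'_iff _ (RingHom.ker i.pt)]
  intro ha
  apply h
  have h2 := congrArg i.ptL (IsLocalization.mk'_spec i.L a s)
  rw [map_mul, ptL_algebraMap, ptL_algebraMap] at h2
  rw [show i.pt a = 0 from ha] at h2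
  exact (mul_eq_zero.mp h2).resolve_right s.2

theorem mem_maximalIdeal_iff (i : HNbd R) (x : i.L) :
    x ∈ IsLocalRing.maximalIdeal i.L ↔ i.ptL x = 0 := by
  rw [IsLocalRing.mem_maximalIdeal, mem_nonunits_iff, isUnit_iff, not_not]

instance (i : HNbd R) : IsLocalHom (algebraMap R i.L) where
  map_nonunit a ha := by
    rw [isUnit_iff, AlgHom.commutes] at ha
    exact (IsLocalRing.residue_ne_zero_iff_isUnit a).mp ha

theorem exists_sub_mem (i : HNbd R) (x : i.L) : ∃ r : R,
    x - algebraMap R i.L r ∈ (IsLocalRing.maximalIdeal R).map (algebraMap R i.L) := by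
  obtain ⟨r, hr⟩ := IsLocalRing.residue_surjective (i.ptL x)
  refine ⟨r, ?_⟩
  rw [Algebra.FormallyUnramified.map_maximalIdeal, mem_maximalIdeal_iff, map_sub, ← hr,
    AlgHom.commutes]
  exact sub_self _

theorem algHom_unique (i : HNbd R) {C : Type*} [CommRing C] [Algebra R C] (J : Ideal C)
    (hJ : J ≤ Ideal.jacobson ⊥)
    (hn : (IsLocalRing.maximalIdeal R).map (algebraMap R C) ≤ J) (φ ψ : i.L →ₐ[R] C) : φ = ψ := by
  refine unramified_algHom_unique J hJ φ ψ fun s => ?_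
  obtain ⟨r, hr⟩ := i.exists_sub_mem s
  have key : ∀ χ : i.L →ₐ[R] C, χ (s - algebraMap R i.L r) ∈ J := fun χ => by
    have := Ideal.mem_map_of_mem (χ : i.L →+* C) hr
    rw [Ideal.map_map, AlgHom.comp_algebraMap] at this
    exact hn this
  have := J.sub_mem (key φ) (key ψ)
  simpa using this

theorem map_le (i : HNbd R) : (IsLocalRing.maximalIdeal R).map (algebraMap R i.L) ≤
    IsLocalRing.maximalIdeal i.L := Algebra.FormallyUnramified.map_maximalIdeal.le

instance (i j : HNbd R) : Subsingleton (i.L →ₐ[R] j.L) :=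
  ⟨fun φ ψ => i.algHom_unique (IsLocalRing.maximalIdeal j.L)
    (by rw [IsLocalRing.jacobson_eq_maximalIdeal ⊥ bot_ne_top]) j.map_le φ ψ⟩

instance : Subsingleton (R →ₐ[R] IsLocalRing.ResidueField R) := inferInstance

theorem ptL_unique (i : HNbd R) (φ : i.L →ₐ[R] IsLocalRing.ResidueField R) : φ = i.ptL :=
  i.algHom_unique ⊥ bot_le (by
    rw [Ideal.map_le_iff_le_comap]; intro x hx; exact (IsLocalRing.residue_eq_zero_iff x).mpr hx) _ _

theorem exists_of_etale {E : Type*} [CommRing E] [Algebra R E] [Algebra.Etale R E]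
    (pt : E →ₐ[R] IsLocalRing.ResidueField R) :
    ∃ (i : HNbd R) (φ : E →ₐ[R] i.L), i.ptL.comp φ = pt := by
  obtain ⟨P, φ, pt', h⟩ := etale_exists_standard pt
  refine ⟨⟨P, pt'⟩, (IsScalarTower.toAlgHom R P.Ring (L ⟨P, pt'⟩)).comp φ, ?_⟩
  ext x
  rw [← h]
  exact ptL_algebraMap ⟨P, pt'⟩ (φ x)

instance : Preorder (HNbd R) where
  le i j := Nonempty (i.L →ₐ[R] j.L)
  le_refl i := ⟨.id _ _⟩
  le_trans i j k h₁ h₂ := ⟨h₂.some.comp h₁.some⟩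

theorem le_def (i j : HNbd R) : i ≤ j ↔ Nonempty (i.L →ₐ[R] j.L) := Iff.rfl

noncomputable def trans (i j : HNbd R) (h : i ≤ j) : i.L →ₐ[R] j.L := Nonempty.some h

instance : Nonempty (HNbd R) :=
  ⟨(exists_of_etale (Algebra.ofId R (IsLocalRing.ResidueField R))).choose⟩

theorem le_of_hom {i j : HNbd R} (φ : i.P.Ring →ₐ[R] j.L) (h : j.ptL.comp φ = i.pt) : i ≤ j :=
  ⟨i.extend φ fun x hx => by
    rw [isUnit_iff]; rw [← h] at hx; exact hx⟩

instance : IsDirectedOrder (HNbd R) where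
  directed i j := by
    have : Algebra.Etale R (i.P.Ring ⊗[R] j.P.Ring) := .comp R i.P.Ring _
    obtain ⟨k, φ, hφ⟩ := exists_of_etale (E := i.P.Ring ⊗[R] j.P.Ring)
      (Algebra.TensorProduct.lift i.pt j.pt (fun _ _ => .all _ _))
    refine ⟨k, le_of_hom (φ.comp Algebra.TensorProduct.includeLeft) ?_,
      le_of_hom (φ.comp Algebra.TensorProduct.includeRight) ?_⟩
    · rw [← AlgHom.comp_assoc, hφ]; ext; simp
    · rw [← AlgHom.comp_assoc, hφ]; ext; simp

end HNbd

theorem flat_of_common {R H : Type u} [CommRing R] [CommRing H] [Algebra R H]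
    (h : ∀ (l : ℕ) (f : Fin l → R) (x : Fin l → H), ∑ t, algebraMap R H (f t) * x t = 0 →
      ∃ (L : Type u) (_ : CommRing L) (_ : Algebra R L) (_ : Module.Flat R L) (φ : L →ₐ[R] H)
        (y : Fin l → L), (∀ t, φ (y t) = x t) ∧ ∑ t, algebraMap R L (f t) * y t = 0) :
    Module.Flat R H := by
  refine Module.Flat.of_forall_isTrivialRelation fun {l f x} hx => ?_
  obtain ⟨L, _, _, _, φ, y, hy, h0⟩ := h l f x (by simpa [Algebra.smul_def] using hx)
  simp only [← Algebra.smul_def] at h0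
  obtain ⟨k, a, z, hz, ha⟩ := Module.Flat.isTrivialRelation_of_sum_smul_eq_zero (R := R) (M := L)
    (f := f) (x := y) h0
  refine ⟨k, a, fun t => φ (z t), fun t => ?_, ha⟩
  rw [← hy, hz, map_sum]
  simp

namespace HNbd
variable {R : Type u} [CommRing R] [IsLocalRing R]

theorem trans_apply {i j : HNbd R} (h : i ≤ j) (φ : i.L →ₐ[R] j.L) (x) : i.trans j h x = φ x := by
  rw [Subsingleton.elim (i.trans j h) φ]

noncomputable abbrev tr (i j : HNbd R) (h : i ≤ j) : i.L →+* j.L := (i.trans j h : i.L →+* j.L)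

instance : DirectedSystem (fun i : HNbd R => i.L) (fun i j h => tr i j h) where
  map_self i x := trans_apply le_rfl (.id _ _) x
  map_map k j i hij hjk x := by
    exact (trans_apply (hij.trans hjk) ((j.trans k hjk).comp (i.trans j hij)) x).symm

variable (R) in
def Hz : Type u := Ring.DirectLimit (fun i : HNbd R => i.L) (fun i j h => tr i j h)

noncomputable instance : CommRing (Hz R) :=
  inferInstanceAs (CommRing (Ring.DirectLimit (fun i : HNbd R => i.L) (fun i j h => tr i j h)))

noncomputable def ofR (i : HNbd R) : i.L →+* Hz R :=
  Ring.DirectLimit.of (fun i : HNbd R => i.L) (fun i j h => tr i j h) i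

theorem ofR_tr {i j : HNbd R} (h : i ≤ j) (x) : ofR j (i.trans j h x) = ofR i x :=
  Ring.DirectLimit.of_f (f := fun i j h => tr i j h) h x

noncomputable instance : Algebra R (Hz R) :=
  ((ofR (Classical.arbitrary (HNbd R))).comp (algebraMap R _)).toAlgebra

theorem ofR_algebraMap (i : HNbd R) (r : R) : ofR i (algebraMap R _ r) = algebraMap R (Hz R) r := by
  obtain ⟨k, hi, hj⟩ := exists_ge_ge i (Classical.arbitrary (HNbd R))
  rw [← ofR_tr hi, AlgHom.commutes, ← (trans _ _ hj).commutes, ofR_tr]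
  rfl

noncomputable def of (i : HNbd R) : i.L →ₐ[R] Hz R :=
  { ofR i with commutes' := ofR_algebraMap i }

theorem of_trans {i j : HNbd R} (h : i ≤ j) (x) : of j (i.trans j h x) = of i x := ofR_tr h x

theorem exists_of (x : Hz R) : ∃ i y, of (R := R) i y = x :=
  Ring.DirectLimit.exists_of (f := fun i j h => tr (R := R) i j h) x

theorem exists_zero {i : HNbd R} {x : i.L} (h : of i x = 0) : ∃ j h, i.trans j h x = 0 :=
  Ring.DirectLimit.of.zero_exact (f' := fun i j h => tr i j h) h

theorem exists_common {ι : Type*} [Finite ι] (x : ι → Hz R) :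
    ∃ (i : HNbd R) (y : ι → i.L), ∀ t, of i (y t) = x t := by
  choose i y h using fun t => exists_of (x t)
  obtain ⟨k, hk⟩ := Finite.exists_le i
  exact ⟨k, fun t => (i t).trans k (hk t) (y t), fun t => by rw [of_trans, h]⟩

theorem hom_ext {C : Type*} [CommRing C] [Algebra R C] {φ ψ : Hz R →ₐ[R] C}
    (h : ∀ i, φ.comp (of i) = ψ.comp (of i)) : φ = ψ := by
  ext x
  obtain ⟨i, y, rfl⟩ := exists_of x
  exact DFunLike.congr_fun (h i) y

theorem exists_lift {C : Type*} [CommRing C] [Algebra R C] (g : ∀ i : HNbd R, i.L →ₐ[R] C)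
    (h : ∀ i j hij, (g j).comp (i.trans j hij) = g i) :
    ∃ φ : Hz R →ₐ[R] C, ∀ i, φ.comp (of i) = g i := by
  let φ : Hz R →+* C := Ring.DirectLimit.lift (fun i : HNbd R => i.L) (fun i j h => tr i j h) C
    (fun i => (g i : i.L →+* C)) (fun i j hij x => DFunLike.congr_fun (h i j hij) x)
  have hφ : ∀ i x, φ (of i x) = g i x := fun i x => Ring.DirectLimit.lift_of ..
  refine ⟨{ φ with commutes' := fun r => ?_ }, fun i => ?_⟩
  · rw [← (of (Classical.arbitrary (HNbd R))).commutes]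
    exact (hφ _ _).trans (AlgHom.commutes _ _)
  · exact AlgHom.ext fun x => hφ i x

theorem exists_ptH : ∃ φ : Hz R →ₐ[R] IsLocalRing.ResidueField R, ∀ i, φ.comp (of i) = ptL i :=
  exists_lift ptL fun i _ _ => ptL_unique i _

noncomputable def ptH : Hz R →ₐ[R] IsLocalRing.ResidueField R := exists_ptH.choose

theorem ptH_of (i : HNbd R) (x) : ptH (of i x) = i.ptL x :=
  DFunLike.congr_fun (exists_ptH.choose_spec i) x

theorem isUnit_Hz (x : Hz R) : IsUnit x ↔ ptH x ≠ 0 := by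
  refine ⟨fun h => (h.map ptH).ne_zero, fun h => ?_⟩
  obtain ⟨i, y, rfl⟩ := exists_of x
  rw [ptH_of, ← isUnit_iff] at h
  exact h.map _

instance : Nontrivial (Hz R) := ptH.toRingHom.domain_nontrivial

instance : IsLocalRing (Hz R) := .of_nonunits_add fun a b ha hb => by
  simp only [mem_nonunits_iff, isUnit_Hz, not_not, map_add] at *
  rw [ha, hb, add_zero]

theorem mem_maximalIdeal_Hz (x : Hz R) : x ∈ IsLocalRing.maximalIdeal (Hz R) ↔ ptH x = 0 := by
  rw [IsLocalRing.mem_maximalIdeal, mem_nonunits_iff, isUnit_Hz, not_not]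

theorem map_le_Hz : (IsLocalRing.maximalIdeal R).map (algebraMap R (Hz R)) ≤
    IsLocalRing.maximalIdeal (Hz R) := by
  rw [Ideal.map_le_iff_le_comap]
  intro x hx
  rw [Ideal.mem_comap, mem_maximalIdeal_Hz, AlgHom.commutes]
  exact (IsLocalRing.residue_eq_zero_iff x).mpr hx

theorem jac_Hz : IsLocalRing.maximalIdeal (Hz R) ≤ Ideal.jacobson ⊥ :=
  IsLocalRing.maximalIdeal_le_jacobson _

theorem flat_aux (l : ℕ) (f : Fin l → R) (x : Fin l → Hz R)
    (h : ∑ t, algebraMap R (Hz R) (f t) * x t = 0) :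
    ∃ (i : HNbd R) (y : Fin l → i.L), (∀ t, of i (y t) = x t) ∧
      ∑ t, algebraMap R i.L (f t) * y t = 0 := by
  obtain ⟨i, y, hy⟩ := exists_common x
  have h0 : of i (∑ t, algebraMap R i.L (f t) * y t) = 0 := by
    rw [map_sum, ← h]
    exact Finset.sum_congr rfl fun t _ => by rw [map_mul, AlgHom.commutes, hy]
  obtain ⟨j, hij, hj⟩ := exists_zero h0
  refine ⟨j, fun t => i.trans j hij (y t), fun t => by rw [of_trans, hy], ?_⟩
  rw [← hj, map_sum]
  exact Finset.sum_congr rfl fun t _ => by rw [map_mul, AlgHom.commutes]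

instance flat_Hz : Module.Flat R (Hz R) :=
  flat_of_common fun l f x h => by
    obtain ⟨i, y, hy, h0⟩ := flat_aux l f x h
    exact ⟨i.L, inferInstance, inferInstance, inferInstance, of i, y, hy, h0⟩

theorem hz_unique {C : Type*} [CommRing C] [Algebra R C] (J : Ideal C)
    (hJ : J ≤ Ideal.jacobson ⊥)
    (hn : (IsLocalRing.maximalIdeal R).map (algebraMap R C) ≤ J) (φ ψ : Hz R →ₐ[R] C) : φ = ψ :=
  hom_ext fun i => i.algHom_unique J hJ hn _ _

theorem hz_exists {C : Type*} [CommRing C] [Algebra R C] (J : Ideal C) (hJ : HenselianRing C J)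
    (hn : (IsLocalRing.maximalIdeal R).map (algebraMap R C) ≤ J) : Nonempty (Hz R →ₐ[R] C) := by
  let q : IsLocalRing.ResidueField R →ₐ[R] C ⧸ J :=
    Ideal.Quotient.liftₐ (IsLocalRing.maximalIdeal R) (Algebra.ofId R (C ⧸ J)) (fun a ha => by
      have := hn (Ideal.mem_map_of_mem _ ha)
      rw [← Ideal.Quotient.eq_zero_iff_mem] at this
      exact this)
  have g : ∀ i : HNbd R, Nonempty (i.L →ₐ[R] C) := fun i => by
    obtain ⟨a, ha⟩ := Ideal.Quotient.mk_surjective (q (i.pt i.P.X))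
    obtain ⟨φ, hφ⟩ := standard_lift hJ i.P a (by
      rw [ha]; exact (i.P.hasMap_X.map i.pt).map q)
    have e : (Ideal.Quotient.mkₐ R J).comp φ = q.comp i.pt := by
      apply i.P.hom_ext
      exact (Ideal.Quotient.eq.mpr hφ).trans ha
    refine ⟨i.extend φ fun x hx => isUnit_of_mk hJ.jac ?_⟩
    have := DFunLike.congr_fun e x
    rw [show Ideal.Quotient.mk J (φ x) = q (i.pt x) from this]
    exact (isUnit_iff_ne_zero.mpr hx).map q
  obtain ⟨φ, -⟩ := exists_lift (fun i => (g i).some)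
    (fun i j hij => i.algHom_unique J hJ.jac hn _ _)
  exact ⟨φ⟩

end HNbd

namespace HNbd
variable {R : Type u} [CommRing R] [IsLocalRing R]

theorem exists_etale_model {ι : Type*} [Finite ι] (x : ι → Hz R) :
    ∃ (D : Type u) (_ : CommRing D) (_ : Algebra R D) (_ : Algebra.Etale R D)
      (ψ : D →ₐ[R] Hz R), ∀ t, ∃ y, ψ y = x t := by
  obtain ⟨i, y, hy⟩ := exists_common x
  obtain ⟨b, hb⟩ := IsLocalization.exist_integer_multiples_of_finite
    (RingHom.ker i.pt).primeCompl y
  have hu : IsUnit (algebraMap i.P.Ring i.L b) := IsLocalization.map_units _ b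
  have hE : Algebra.Etale i.P.Ring (Localization.Away (b : i.P.Ring)) :=
    .of_isLocalizationAway (b : i.P.Ring)
  let ψ : Localization.Away (b : i.P.Ring) →ₐ[R] i.L :=
    IsLocalization.Away.liftAlgHom (f := IsScalarTower.toAlgHom R i.P.Ring i.L) (b : i.P.Ring) hu
  have hψ : ∀ z, ψ (algebraMap i.P.Ring _ z) = algebraMap i.P.Ring i.L z := by
    intro z
    exact IsLocalization.Away.lift_eq (b : i.P.Ring) hu z
  refine ⟨Localization.Away (b : i.P.Ring), inferInstance, inferInstance,
    .comp R i.P.Ring _, (of i).comp ψ, fun t => ?_⟩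
  obtain ⟨c, hc⟩ := hb t
  refine ⟨algebraMap _ _ c * IsLocalization.Away.invSelf (b : i.P.Ring), ?_⟩
  rw [← hy, AlgHom.comp_apply]
  congr 1
  apply hu.mul_left_cancel
  rw [← Algebra.smul_def _ (y t), ← hc, ← hψ, ← hψ, ← map_mul]
  congr 1
  rw [mul_left_comm, IsLocalization.Away.mul_invSelf, mul_one]

theorem henselian_aux (f : (Hz R)[X]) (hf : f.Monic) (a₀ : Hz R)
    (h0 : f.eval a₀ ∈ IsLocalRing.maximalIdeal (Hz R)) (h1 : IsUnit (f.derivative.eval a₀)) :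
    ∃ a, f.IsRoot a ∧ a - a₀ ∈ IsLocalRing.maximalIdeal (Hz R) := by
  obtain ⟨D, _, _, _, ψ, hψ⟩ := exists_etale_model (fun t : Fin (f.natDegree + 1) => f.coeff t)
  have hl : f ∈ Polynomial.lifts (ψ : D →+* Hz R) := by
    rw [Polynomial.lifts_iff_coeff_lifts]
    intro n
    by_cases hn : n < f.natDegree + 1
    · obtain ⟨y, hy⟩ := hψ ⟨n, hn⟩
      exact ⟨y, hy⟩
    · exact ⟨0, by rw [map_zero, Polynomial.coeff_eq_zero_of_natDegree_lt (by omega)]⟩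
  obtain ⟨q, hq, -, hm⟩ := Polynomial.lifts_and_natDegree_eq_and_monic hl hf
  let P : StandardEtalePair D := ⟨q, hm, q.derivative, 1, 0, 1, by ring⟩
  let : Algebra R P.Ring := ((algebraMap D P.Ring).comp (algebraMap R D)).toAlgebra
  have : IsScalarTower R D P.Ring := .of_algebraMap_eq' rfl
  have : Algebra.Etale R P.Ring := .comp R D _
  let : Algebra D (IsLocalRing.ResidueField R) := ((ptH.comp ψ : D →ₐ[R] _) : D →+* _).toAlgebra
  have : IsScalarTower R D (IsLocalRing.ResidueField R) :=
    .of_algebraMap_eq' (ptH.comp ψ : D →ₐ[R] _).comp_algebraMap.symm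
  have e : ∀ p : D[X], aeval (ptH a₀) p = ptH ((p.map (ψ : D →+* Hz R)).eval a₀) := by
    intro p
    rw [Polynomial.eval_map, aeval_def, ← AlgHom.coe_toRingHom, Polynomial.hom_eval₂]
    rfl
  have hmap : P.HasMap (ptH a₀) := by
    constructor
    · rw [e, show P.f = q from rfl, hq]; exact (mem_maximalIdeal_Hz _).mp h0
    · rw [e, show P.g = q.derivative from rfl, ← Polynomial.derivative_map, hq]
      exact h1.map _
  obtain ⟨i, φ, hφ⟩ := exists_of_etale ((P.lift _ hmap).restrictScalars R)
  let χ : P.Ring →ₐ[R] Hz R := (of i).comp φ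
  have hχ : ∀ z, ptH (χ z) = P.lift _ hmap z := fun z => by
    rw [show χ z = of i (φ z) from rfl, ptH_of]
    exact DFunLike.congr_fun hφ z
  have hc : χ.comp (IsScalarTower.toAlgHom R D P.Ring) = ψ := by
    refine unramified_algHom_unique _ jac_Hz _ _ fun s => ?_
    rw [mem_maximalIdeal_Hz, map_sub]
    have : ptH (χ (algebraMap D P.Ring s)) = ptH (ψ s) := by
      rw [hχ, AlgHom.commutes]; rfl
    exact sub_eq_zero.mpr this
  refine ⟨χ P.X, ?_, ?_⟩
  · have := congrArg χ P.hasMap_X.1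
    rw [map_zero, aeval_def, ← AlgHom.coe_toRingHom, Polynomial.hom_eval₂] at this
    rw [Polynomial.IsRoot, ← hq, Polynomial.eval_map, ← hc]
    exact this
  · rw [mem_maximalIdeal_Hz, map_sub, hχ, P.lift_X, sub_self]

instance : HenselianLocalRing (Hz R) where
  is_henselian f hf a₀ h0 h1 := henselian_aux f hf a₀ h0 h1

end HNbd

theorem HenselianRing.congr {H H' : Type*} [CommRing H] [CommRing H'] (e : H ≃+* H') (J : Ideal H)
    (J' : Ideal H') (hJ : ∀ x, x ∈ J' ↔ e.symm x ∈ J) (h : HenselianRing H J) :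
    HenselianRing H' J' := by
  have jac : J' ≤ Ideal.jacobson ⊥ := by
    intro x hx
    rw [Ideal.mem_jacobson_bot]
    intro y
    have := Ideal.mem_jacobson_bot.mp (h.jac ((hJ x).mp hx)) (e.symm y)
    simpa using this.map e
  refine ⟨jac, fun f hf a₀ h0 h1 => ?_⟩
  have hu := isUnit_of_mk jac h1
  have ev : ∀ (p : H'[X]) (a : H'), (p.map (e.symm : H' →+* H)).eval (e.symm a) =
      e.symm (p.eval a) := fun p a => by
    rw [Polynomial.eval_map]
    exact (Polynomial.hom_eval₂ p (RingHom.id _) (e.symm : H' →+* H) a).symm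
  obtain ⟨a, ha, haa⟩ := h.is_henselian (f.map (e.symm : H' →+* H)) (hf.map _) (e.symm a₀)
    (by rw [ev]; exact (hJ _).mp h0)
    (by rw [Polynomial.derivative_map, ev]; exact (hu.map e.symm).map _)
  refine ⟨e a, ?_, ?_⟩
  · have h2 := ev f (e a)
    rw [e.symm_apply_apply, ha.eq_zero] at h2
    exact (map_eq_zero_iff e.symm e.symm.injective).mp h2.symm
  · rw [hJ, map_sub, e.symm_apply_apply]; exact haa

theorem IsHenselization.congr {R H H' : Type u} [CommRing R] [CommRing H] [CommRing H']
    [Algebra R H] [Algebra R H'] {I : Ideal R} (h : IsHenselization R H I) (e : H ≃ₐ[R] H') :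
    IsHenselization R H' I := by
  have hle : ∀ (D C : Type u) [CommRing D] [Algebra R D] [CommRing C] [Algebra R C] (J : Ideal C)
    (φ : D →ₐ[R] C), I.map (algebraMap R C) ≤ J →
      (I.map (algebraMap R D)).map (φ : D →+* C) ≤ J := by
    intro D C _ _ _ _ J φ hn
    rw [Ideal.map_map, AlgHom.comp_algebraMap]; exact hn
  refine ⟨h.1.congr e.toRingEquiv _ _ fun x => ?_, fun C _ _ J hJ hn => ?_⟩
  · constructor
    · intro hx
      have := Ideal.mem_map_of_mem (e.symm.toAlgHom : H' →+* H) hx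
      rw [Ideal.map_map, AlgHom.comp_algebraMap] at this
      exact this
    · intro hx
      have := Ideal.mem_map_of_mem (e.toAlgHom : H →+* H') hx
      rw [Ideal.map_map, AlgHom.comp_algebraMap] at this
      simpa using this
  · obtain ⟨φ, hφ, hu⟩ := h.2 C _ _ J hJ hn
    refine ⟨φ.comp e.symm.toAlgHom, hle _ _ _ _ hn, fun ψ _ => ?_⟩
    have := hu (ψ.comp e.toAlgHom) (hle _ _ _ _ hn)
    rw [← this]
    ext x
    simp

theorem HNbd.isHenselization (R : Type u) [CommRing R] [IsLocalRing R] :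
    IsHenselization R (HNbd.Hz R) (IsLocalRing.maximalIdeal R) := by
  refine ⟨HenselianLocalRing.toHenselianRing.of_le map_le_Hz, fun C _ _ J hJ hn => ?_⟩
  obtain ⟨φ⟩ := hz_exists J hJ hn
  refine ⟨φ, ?_, fun ψ _ => hz_unique J hJ.jac hn _ _⟩
  show Ideal.map (φ : Hz R →+* C) _ ≤ J
  rw [Ideal.map_map, AlgHom.comp_algebraMap]; exact hn

theorem fixed_tensor {R A H G : Type*} [CommRing R] [CommRing A] [CommRing H] [Algebra R A]
    [Algebra R H] [Module.Flat R H] [Finite G] (σ : G → A →ₐ[R] A)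
    (hfix : ∀ a, (∀ g, σ g a = a) → ∃ r, algebraMap R A r = a) (z : A ⊗[R] H)
    (hz : ∀ g, Algebra.TensorProduct.map (σ g) (AlgHom.id R H) z = z) :
    ∃ h : H, (1 : A) ⊗ₜ[R] h = z := by
  classical
  cases nonempty_fintype G
  let d : A →ₗ[R] (G → A) := LinearMap.pi fun g => (σ g).toLinearMap - LinearMap.id
  have hex : Function.Exact (Algebra.linearMap R A) d := by
    intro a
    constructor
    · intro h
      obtain ⟨r, hr⟩ := hfix a fun g => by
        have := congrFun h g
        simpa [d, sub_eq_zero] using this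
      exact ⟨r, hr⟩
    · rintro ⟨r, rfl⟩
      ext g
      simp [d]
  have hex2 := Module.Flat.lTensor_exact H hex
  let z' : H ⊗[R] A := TensorProduct.comm R A H z
  have h0 : d.lTensor H z' = 0 := by
    apply (TensorProduct.piRight R R H (fun _ : G => A)).injective
    rw [map_zero]
    ext g
    have e : ∀ w : A ⊗[R] H, TensorProduct.piRight R R H (fun _ : G => A)
        (d.lTensor H (TensorProduct.comm R A H w)) g = TensorProduct.comm R A H
          (Algebra.TensorProduct.map (σ g) (AlgHom.id R H) w) - TensorProduct.comm R A H w := by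
      intro w
      induction w with
      | zero => simp
      | tmul a h => simp [d, TensorProduct.tmul_sub]
      | add x y hx hy => simp only [map_add, Pi.add_apply, hx, hy]; abel
    rw [e, hz, sub_self]; rfl
  obtain ⟨y, hy⟩ := (hex2 z').mp h0
  have e2 : ∀ y : H ⊗[R] R, ∃ h : H, (1 : A) ⊗ₜ[R] h =
      (TensorProduct.comm R A H).symm ((Algebra.linearMap R A).lTensor H y) := by
    intro y
    refine ⟨TensorProduct.rid R H y, ?_⟩
    induction y with
    | zero => simp
    | tmul h r => simp [TensorProduct.tmul_smul, Algebra.algebraMap_eq_smul_one, TensorProduct.smul_tmul']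
    | add x y hx hy => simp only [map_add, TensorProduct.tmul_add, hx, hy]
  obtain ⟨h, hh⟩ := e2 y
  exact ⟨h, by rw [hh, hy]; simp [z']⟩

theorem integral_tensor {R A H : Type*} [CommRing R] [CommRing A] [CommRing H] [Algebra R A]
    [Algebra R H] [Algebra.IsIntegral R A] :
    letI : Algebra H (A ⊗[R] H) := Algebra.TensorProduct.rightAlgebra
    Algebra.IsIntegral H (A ⊗[R] H) := by
  let : Algebra H (A ⊗[R] H) := Algebra.TensorProduct.rightAlgebra
  have : IsScalarTower R H (A ⊗[R] H) := inferInstance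
  refine ⟨fun z => ?_⟩
  induction z with
  | zero => exact isIntegral_zero
  | add x y hx hy => exact hx.add hy
  | tmul a h =>
    have h1 : IsIntegral H (a ⊗ₜ[R] (1 : H)) :=
      ((Algebra.IsIntegral.isIntegral (R := R) a).map
        (Algebra.TensorProduct.includeLeft : A →ₐ[R] A ⊗[R] H)).tower_top
    have h2 : IsIntegral H ((1 : A) ⊗ₜ[R] h) := isIntegral_algebraMap (R := H) (A := A ⊗[R] H) (x := h)
    have := h1.mul h2
    simpa using this

theorem henselian_tensor {R A H : Type*} [CommRing R] [CommRing A] [CommRing H] [Algebra R A]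
    [Algebra R H] [Algebra.IsIntegral R A] [HenselianLocalRing H] (n : Ideal R) (I : Ideal A)
    (hn : n.map (algebraMap R H) ≤ IsLocalRing.maximalIdeal H)
    (hI : I ≤ (n.map (algebraMap R A)).radical) :
    HenselianRing (A ⊗[R] H) (I.map (algebraMap A (A ⊗[R] H))) := by
  let : Algebra H (A ⊗[R] H) := Algebra.TensorProduct.rightAlgebra
  have : IsScalarTower R H (A ⊗[R] H) := inferInstance
  have : Algebra.IsIntegral H (A ⊗[R] H) := integral_tensor
  refine (henselianRing_of_isIntegral (H := H) (S := A ⊗[R] H)).of_le ?_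
  refine (Ideal.map_mono hI).trans ((Ideal.map_radical_le _).trans (Ideal.radical_mono ?_))
  rw [Ideal.map_map, ← IsScalarTower.algebraMap_eq, IsScalarTower.algebraMap_eq R H, ← Ideal.map_map]
  exact Ideal.map_mono hn

theorem orbit_radical {R A G : Type*} [CommRing R] [CommRing A] [Algebra R A] [Group G] [Finite G]
    [MulSemiringAction G A] (hfix : ∀ a : A, (∀ g : G, g • a = a) → ∃ r, algebraMap R A r = a)
    (I : Ideal A) (hI : ∀ (g : G), ∀ a ∈ I, g • a ∈ I) :
    I ≤ ((I.comap (algebraMap R A)).map (algebraMap R A)).radical := by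
  classical
  cases nonempty_fintype G
  intro a ha
  refine ⟨Fintype.card G, ?_⟩
  let p : A[X] := ∏ g : G, (X - C (g • a))
  have hp0 : p.eval a = 0 := by
    rw [Polynomial.eval_prod]
    exact Finset.prod_eq_zero (Finset.mem_univ 1) (by simp)
  have hpg : ∀ g : G, g • p = p := fun g => by
    simp only [p, Finset.smul_prod', smul_sub, Polynomial.smul_X, Polynomial.smul_C, smul_smul]
    exact Fintype.prod_equiv (Equiv.mulLeft g) _ _ fun x => rfl
  let q : A[X] := p - X ^ Fintype.card G
  have hq : q.map (Ideal.Quotient.mk I) = 0 := by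
    simp only [q, p, Polynomial.map_sub, Polynomial.map_prod, Polynomial.map_pow, map_X, map_C]
    rw [Finset.prod_congr rfl (g := fun _ => X) fun g _ => by
      rw [Ideal.Quotient.eq_zero_iff_mem.mpr (hI g a ha), map_zero, sub_zero]]
    simp
  have hqg : ∀ g : G, g • q = q := fun g => by
    simp only [q, smul_sub, hpg, smul_pow', Polynomial.smul_X]
  have hc : ∀ n, q.coeff n ∈ (I.comap (algebraMap R A)).map (algebraMap R A) := fun n => by
    have h1 : q.coeff n ∈ I := by
      have := congrArg (fun f => Polynomial.coeff f n) hq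
      rw [← Ideal.Quotient.eq_zero_iff_mem]
      simpa using this
    obtain ⟨r, hr⟩ := hfix (q.coeff n) fun g => by
      conv_rhs => rw [← hqg g]
      rw [Polynomial.coeff_smul]
    rw [← hr] at h1 ⊢
    exact Ideal.mem_map_of_mem _ h1
  have : a ^ Fintype.card G = - q.eval a := by simp [q, hp0]
  rw [this]
  refine neg_mem ?_
  rw [Polynomial.eval_eq_sum]
  exact Ideal.sum_mem _ fun n _ => Ideal.mul_mem_right _ _ (hc n)

theorem core {R A B G : Type u} [CommRing R] [IsLocalRing R] [CommRing A] [CommRing B]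
    [Group G] [Finite G] [Algebra R A] [Algebra A B] [Algebra R B] [IsScalarTower R A B]
    [MulSemiringAction G A] [MulSemiringAction G B] [Algebra.IsIntegral R A]
    (hinj : Function.Injective (algebraMap R A))
    (hcompat : ∀ (g : G) (a : A), algebraMap A B (g • a) = g • algebraMap A B a)
    (hR : ∀ (g : G) (r : R), g • algebraMap R A r = algebraMap R A r)
    (hfix : ∀ a : A, (∀ g : G, g • a = a) → ∃ r, algebraMap R A r = a)
    (I : Ideal A) (hI : ∀ (g : G), ∀ a ∈ I, g • a ∈ I)
    (hIn : I.comap (algebraMap R A) = IsLocalRing.maximalIdeal R)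
    (hB : IsHenselization A B I) :
    ∃ j : HNbd.Hz R →ₐ[R] B, Function.Injective j ∧
      ∀ b, (∀ g : G, g • b = b) ↔ ∃ h, j h = b := by
  have hle : ∀ (D C : Type u) [CommRing D] [Algebra A D] [CommRing C] [Algebra A C] (J : Ideal C)
    (φ : D →ₐ[A] C), I.map (algebraMap A C) ≤ J →
      (I.map (algebraMap A D)).map (φ : D →+* C) ≤ J := by
    intro D C _ _ _ _ J φ hn
    rw [Ideal.map_map, AlgHom.comp_algebraMap]; exact hn
  have hnI : (IsLocalRing.maximalIdeal R).map (algebraMap R A) ≤ I := by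
    rw [Ideal.map_le_iff_le_comap, hIn]
  have hnB : (IsLocalRing.maximalIdeal R).map (algebraMap R B) ≤ I.map (algebraMap A B) := by
    rw [IsScalarTower.algebraMap_eq R A B, ← Ideal.map_map]; exact Ideal.map_mono hnI
  have hS : HenselianRing (A ⊗[R] HNbd.Hz R) (I.map (algebraMap A (A ⊗[R] HNbd.Hz R))) :=
    henselian_tensor (IsLocalRing.maximalIdeal R) I HNbd.map_le_Hz (by
      have := orbit_radical (R := R) hfix I hI
      rwa [hIn] at this)
  have hnS : (IsLocalRing.maximalIdeal R).map (algebraMap R (A ⊗[R] HNbd.Hz R)) ≤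
      I.map (algebraMap A (A ⊗[R] HNbd.Hz R)) := by
    rw [IsScalarTower.algebraMap_eq R A, ← Ideal.map_map]; exact Ideal.map_mono hnI
  obtain ⟨j⟩ := HNbd.hz_exists _ hB.1 hnB
  let ψ : A ⊗[R] HNbd.Hz R →ₐ[A] B :=
    Algebra.TensorProduct.lift (Algebra.ofId A B) j (fun _ _ => .all _ _)
  have hψ : ∀ a h, ψ (a ⊗ₜ h) = algebraMap A B a * j h := fun a h => by
    simp [ψ, Algebra.ofId_apply]
  obtain ⟨θ, -, -⟩ := hB.2 _ _ _ _ hS le_rfl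
  have hθψ : θ.comp ψ = AlgHom.id A _ := by
    apply Algebra.TensorProduct.ext
    · ext
    · exact HNbd.hz_unique _ hS.jac hnS _ _
  have hψθ : ψ.comp θ = AlgHom.id A _ :=
    (hB.2 _ _ _ _ hB.1 le_rfl).unique (hle _ _ _ _ le_rfl) (hle _ _ _ _ le_rfl)
  have hψinj : Function.Injective ψ :=
    Function.LeftInverse.injective (g := θ) fun z => DFunLike.congr_fun hθψ z
  let τ : G → B →ₐ[R] B := fun g =>
    { MulSemiringAction.toRingHom G B g with
      commutes' := fun r => by
        show g • algebraMap R B r = algebraMap R B r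
        rw [IsScalarTower.algebraMap_apply R A B, ← hcompat, hR] }
  have hj : ∀ g h, g • j h = j h := fun g h => by
    have : (τ g).comp j = j := HNbd.hz_unique _ hB.1.jac hnB _ _
    exact DFunLike.congr_fun this h
  let σ : G → A →ₐ[R] A := fun g =>
    { MulSemiringAction.toRingHom G A g with commutes' := hR g }
  have hσ : ∀ g a, σ g a = g • a := fun g a => rfl
  have heq : ∀ g z, ψ (Algebra.TensorProduct.map (σ g) (AlgHom.id R _) z) = g • ψ z := by
    intro g z
    induction z with
    | zero => simp
    | add x y hx hy => simp only [map_add, smul_add, hx, hy]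
    | tmul a h =>
      rw [Algebra.TensorProduct.map_tmul, hψ, hψ, hσ, hcompat, smul_mul', hj]; rfl
  refine ⟨j, ?_, fun b => ⟨fun hb => ?_, ?_⟩⟩
  · have h1 : Function.Injective (Algebra.TensorProduct.includeRight : HNbd.Hz R →ₐ[R] A ⊗[R] _) :=
      Algebra.TensorProduct.includeRight_injective hinj
    intro x y hxy
    apply h1
    apply hψinj
    simp only [Algebra.TensorProduct.includeRight_apply, hψ, hxy]
  · have hb' : ψ (θ b) = b := DFunLike.congr_fun hψθ b
    obtain ⟨h, hh⟩ := fixed_tensor σ hfix (θ b) fun g => by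
      apply hψinj
      rw [heq, hb', hb]
    refine ⟨h, ?_⟩
    rw [← hb', ← hh, hψ, map_one, one_mul]
  · rintro ⟨h, rfl⟩ g
    exact hj g h

end Helpers

/-- Let `G` be a finite group acting on a scheme `X` whose geometric
quotient `X/G` exists as a scheme, and let `x ∈ X`.  Then `(X^h_{Gx})/G ≅ (X/G)^h_{[x]}`.
Algebraically:  let `A` be the semilocal ring of the orbit `G·x` (so the maximal ideals of
`A` form the single `G`-orbit of `m`, `X/G = Spec Aᴳ` locally) and let `B` be the
henselization of `A` along the ideal `I = ⨅_g g·m` of the orbit, equipped with its induced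
`G`-action.  Then the fixed subring `Bᴳ` is a henselization of `Aᴳ` along the restricted
ideal, i.e. `Spec Bᴳ = (X^h_{Gx})/G` is the henselization of `X/G` at `[x]`. -/
theorem fixed_ring_of_equivariant_henselization_is_henselization_of_quotient
    (G : Type u) [Group G] [Finite G] (A : Type u) [CommRing A] [MulSemiringAction G A]
    (m : Ideal A) [m.IsMaximal]
    (horb : ∀ m' : Ideal A, m'.IsMaximal →
      ∃ g : G, m' = Ideal.comap (MulSemiringAction.toRingHom G A g) m)
    (B : Type u) [CommRing B] [Algebra A B] [MulSemiringAction G B]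
    (hcompat : ∀ (g : G) (a : A), algebraMap A B (g • a) = g • algebraMap A B a)
    (hB : IsHenselization A B (⨅ g : G, Ideal.comap (MulSemiringAction.toRingHom G A g) m)) :
    letI : Algebra (fixedSubring G A) (fixedSubring G B) := (fixedMap hcompat).toAlgebra
    IsHenselization (fixedSubring G A) (fixedSubring G B)
      (Ideal.comap (fixedSubring G A).subtype
        (⨅ g : G, Ideal.comap (MulSemiringAction.toRingHom G A g) m)) := by
  let inst : Algebra (fixedSubring G A) (fixedSubring G B) := (fixedMap hcompat).toAlgebra
  have memI : ∀ a : A, a ∈ (⨅ g : G, Ideal.comap (MulSemiringAction.toRingHom G A g) m) ↔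
      ∀ g : G, g • a ∈ m := fun a => by
    simp only [Ideal.mem_iInf, Ideal.mem_comap]; rfl
  have hI : ∀ (g : G), ∀ a ∈ (⨅ g : G, Ideal.comap (MulSemiringAction.toRingHom G A g) m),
      g • a ∈ (⨅ g : G, Ideal.comap (MulSemiringAction.toRingHom G A g) m) := by
    intro g a ha
    rw [memI] at ha ⊢
    intro g'
    rw [smul_smul]; exact ha _
  generalize hIdef : (⨅ g : G, Ideal.comap (MulSemiringAction.toRingHom G A g) m) = I at *
  have memR : ∀ r : fixedSubring G A, (r : A) ∈ I ↔ (r : A) ∈ m := fun r => by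
    rw [memI]
    exact ⟨fun h => by simpa using h 1, fun h g => by rwa [r.2 g]⟩
  have hunit : ∀ r : fixedSubring G A, IsUnit r ↔ (r : A) ∉ I := fun r => by
    rw [memR]
    constructor
    · intro h h2
      exact Ideal.IsMaximal.ne_top ‹_› (Ideal.eq_top_of_isUnit_mem m h2
        (h.map (fixedSubring G A).subtype))
    · intro h
      have hu : IsUnit (r : A) := by
        by_contra hn
        obtain ⟨M, hM, hrM⟩ := exists_max_ideal_of_mem_nonunits hn
        obtain ⟨g, rfl⟩ := horb M hM
        apply h
        have : g • (r : A) ∈ m := hrM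
        rwa [r.2 g] at this
      obtain ⟨s, hs⟩ := hu.exists_right_inv
      refine IsUnit.of_mul_eq_one ⟨s, fun g => ?_⟩ (Subtype.ext hs)
      apply hu.mul_left_cancel
      rw [hs]
      conv_lhs => rw [← r.2 g]
      rw [← smul_mul', hs, smul_one]
  have : Nontrivial A := ⟨0, 1, fun h => Ideal.IsMaximal.ne_top ‹m.IsMaximal›
    ((Ideal.eq_top_iff_one m).mpr (h ▸ m.zero_mem))⟩
  have hloc : IsLocalRing (fixedSubring G A) := .of_nonunits_add fun a b ha hb => by
    simp only [mem_nonunits_iff, hunit, not_not] at *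
    exact I.add_mem ha hb
  have hIn : I.comap (algebraMap (fixedSubring G A) A) =
      IsLocalRing.maximalIdeal (fixedSubring G A) := by
    ext r
    rw [IsLocalRing.mem_maximalIdeal, mem_nonunits_iff, hunit, not_not]; rfl
  have hfix : ∀ a : A, (∀ g : G, g • a = a) → ∃ r, algebraMap (fixedSubring G A) A r = a :=
    fun a ha => ⟨⟨a, ha⟩, rfl⟩
  have h_integral : Algebra.IsIntegral (fixedSubring G A) A := by
    have : Algebra.IsInvariant (fixedSubring G A) A G := ⟨hfix⟩
    exact Algebra.IsInvariant.isIntegral (fixedSubring G A) A G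
  let : Algebra (fixedSubring G A) B := ((algebraMap A B).comp (fixedSubring G A).subtype).toAlgebra
  have : IsScalarTower (fixedSubring G A) A B := .of_algebraMap_eq' rfl
  obtain ⟨j, hji, hj⟩ := core (R := fixedSubring G A) (G := G) Subtype.val_injective hcompat
    (fun g r => r.2 g) hfix I hI hIn hB
  have hH := HNbd.isHenselization (fixedSubring G A)
  rw [← hIn] at hH
  let j' : HNbd.Hz (fixedSubring G A) →ₐ[fixedSubring G A] fixedSubring G B :=
    { (j : HNbd.Hz (fixedSubring G A) →+* B).codRestrict (fixedSubring G B)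
        (fun h => (hj (j h)).mpr ⟨h, rfl⟩) with
      commutes' := fun r => Subtype.ext (j.commutes r) }
  refine hH.congr (AlgEquiv.ofBijective j' ⟨fun x y h => hji (congrArg Subtype.val h), fun b => ?_⟩)
  obtain ⟨h, hh⟩ := (hj b.1).mp b.2
  exact ⟨h, Subtype.ext hh⟩
end
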